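/- arXiv:2503.05695 — 10 statements merged into one kernel-verified Lean document; each statement's English description precedes it below -/
import Mathlib

section
/- For every fair-division instance with monotone non-increasing valuations there exists a connected allocation A = (A_1,…,A_n) that is EF1 under path constraints (EF1P), i.e., v_i^+(A_i) ≥ v_i(A_j) holds for all agents i, j (each agent i, by removing at most one endpoint item from her own bundle A_i, values her bundle at least as much as every other bundle). -/
/-!
The proof is a Sperner-type argument on a grid finer than the path, followed by a rounding step
that is the same for all agents.

**Fine cuts.** Put `N = n` grid positions on every item. Position `p = N * c + α` with `α < N` means
that `c` items lie to the left and the cut falls on item `c + 1`, at fraction `α`. A division of the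
path is a monotone vector `0 = x 0 ≤ x 1 ≤ … ≤ x n = n * m` of positions, and piece `k` lies between
`x k` and `x (k + 1)`. A shift `e < N` rounds the position `p` to the item boundary `(p + e) / N`.

**Sandwich (`val_bounds`).** The piece between `p = N * c + α` and `q = N * d + β` gets the virtual
value `val`: it is `0` if `c = d`; otherwise it is the better of the two sets `{c+1, …, d}` and
`{c+2, …, d+1}` if `α < β`, and the value of `{c+2, …, d}` if `β ≤ α`. Whatever the shift, the
rounded piece `A` satisfies `v A ≤ val ≤ v⁺(A)`. Indeed, rounding with a common threshold lets `A`
contain both partial items only when `α < β`, and neither of them only when `β ≤ α`. So it is enough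
to find an assignment in which every agent maximises her own virtual value, where different agents
may look at different fine divisions, as long as all these divisions round to the same allocation.

**Sperner (`odd_rainbow`).** Fine divisions are the vertices of the Kuhn triangulation of a simplex,
whose cells are the sets of vertices any two of which are comparable and differ by at most one in
every coordinate. If each vertex is labelled by one of its nonempty pieces, the number of full cells
with pairwise distinct labels is odd. The proof is the usual door-counting induction; the geometric
input is `completes_count`: a facet carrying the labels `0, …, d - 1` lies in two cells, or in one
if it lies on the face where the last piece is empty.

**Labels (`exists_choice`).** The vertex `x` is owned by the agent `∑ x k mod n`; the vertices of a
full cell have distinct owners. As items are chores, an empty piece is a best one. Hence the owner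
can always choose a best piece `k` whose cyclic successor `k + 1` is nonempty: any piece if none is
empty, and otherwise an empty piece followed cyclically by a nonempty one. The label of `x` is the
successor of the chosen piece, so distinct labels mean distinct chosen pieces.

**Rounding (`exists_shift`).** Within a cell each of the `n - 1` cuts moves by at most one position,
so each of them rules out at most one of the `n` shifts, and some shift rounds all vertices of the
cell to the same allocation.
-/

/-- A bundle is connected (w.r.t. the path `1, …, m`) if it is an interval
(possibly empty). -/
def IsConnectedBundle (A : Finset ℕ) : Prop := ∃ s t : ℕ, A = Finset.Icc s t

/-- `A` is an allocation of the items `M = {1, …, m}` to the `n` agents: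
pairwise disjoint bundles whose union is `M`. -/
def IsAllocation (m : ℕ) {n : ℕ} (A : Fin n → Finset ℕ) : Prop :=
  (∀ i j : Fin n, i ≠ j → Disjoint (A i) (A j)) ∧
  Finset.univ.biUnion A = Finset.Icc 1 m

/-- `v⁺(A)`: for a nonempty connected bundle `A`, the maximum of `v` over `A`,
`A` minus its smallest element and `A` minus its largest element; `0` on `∅`. -/
def vplus (v : Finset ℕ → ℤ) (A : Finset ℕ) : ℤ :=
  if h : A.Nonempty then
    max (v A) (max (v (A.erase (A.min' h))) (v (A.erase (A.max' h))))
  else 0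

/-- `v⁻(A)`: for a nonempty connected bundle `A`, the minimum of `v` over `A`,
`A` minus its smallest element and `A` minus its largest element; `0` on `∅`. -/
def vminus (v : Finset ℕ → ℤ) (A : Finset ℕ) : ℤ :=
  if h : A.Nonempty then
    min (v A) (min (v (A.erase (A.min' h))) (v (A.erase (A.max' h))))
  else 0


/-- An item `x` is a chore: removing it from any bundle containing it never
decreases any agent's value. -/
def IsChore (m : ℕ) {n : ℕ} (v : Fin n → Finset ℕ → ℤ) (x : ℕ) : Prop :=
  ∀ i : Fin n, ∀ S ⊆ Finset.Icc 1 m, x ∈ S → v i S ≤ v i (S.erase x)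

/-! ### The Kuhn triangulation -/

namespace PathEF1

/-- Vertices of the triangulated simplex of dimension `d` and side `L`: the vectors
`0 = x 0 ≤ x 1 ≤ … ≤ x d ≤ L`, extended by the constant `L` beyond `d`. With this encoding the
face where the last piece is empty, `x d = L`, is literally the simplex of dimension `d - 1`. -/
structure IsCut (L d : ℕ) (x : ℕ → ℕ) : Prop where
  zero : x 0 = 0
  mono : Monotone x
  last : ∀ k, d < k → x k = L

/-- `y` arises from `x` by moving some of the cuts one position to the right. -/
def Step (x y : ℕ → ℕ) : Prop := ∀ k, x k ≤ y k ∧ y k ≤ x k + 1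

/-- Cells of the Kuhn triangulation, of any dimension: the cliques of the relation
`Step x y ∨ Step y x`. -/
def IsCell (F : Finset (ℕ → ℕ)) : Prop := ∀ x ∈ F, ∀ y ∈ F, Step x y ∨ Step y x

/-- The sum of the cut positions; it is injective on every cell and orders its vertices. -/
def wt (d : ℕ) (x : ℕ → ℕ) : ℕ := ∑ k ∈ Finset.Icc 1 d, x k

lemma IsCut.out {L d : ℕ} {x y : ℕ → ℕ} (hx : IsCut L d x) (hy : IsCut L d y) {k : ℕ}
    (hk : k ∉ Finset.Icc 1 d) : x k = y k := by
  rw [Finset.mem_Icc] at hk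
  by_cases h : k = 0
  · rw [h, hx.zero, hy.zero]
  · rw [hx.last k (by omega), hy.last k (by omega)]

lemma IsCut.le {L d : ℕ} {x : ℕ → ℕ} (hx : IsCut L d x) (k : ℕ) : x k ≤ L := by
  have := hx.mono (show k ≤ k + d + 1 by omega)
  rwa [hx.last (k + d + 1) (by omega)] at this

lemma IsCut.up {L d : ℕ} {x : ℕ → ℕ} (hx : IsCut L d x) : IsCut L (d + 1) x :=
  ⟨hx.zero, hx.mono, fun k hk => hx.last k (by omega)⟩

lemma wt_mono {d : ℕ} {x y : ℕ → ℕ} (h : ∀ k, x k ≤ y k) : wt d x ≤ wt d y :=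
  Finset.sum_le_sum fun k _ => h k

lemma wt_le {d : ℕ} {x y : ℕ → ℕ} (h : Step x y) : wt d y ≤ wt d x + d := by
  calc wt d y ≤ ∑ k ∈ Finset.Icc 1 d, (x k + 1) := Finset.sum_le_sum fun k _ => (h k).2
    _ = wt d x + d := by simp [wt, Finset.sum_add_distrib]

lemma eq_of_wt {L d : ℕ} {x y : ℕ → ℕ} (hx : IsCut L d x) (hy : IsCut L d y)
    (h : ∀ k, x k ≤ y k) (hw : wt d y ≤ wt d x) : x = y := by
  have h1 := (Finset.sum_eq_sum_iff_of_le (s := Finset.Icc 1 d) fun k _ => h k).1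
    (le_antisymm (wt_mono h) hw)
  funext k
  by_cases hk : k ∈ Finset.Icc 1 d
  · exact h1 k hk
  · exact hx.out hy hk

/-- Two cuts lying in a common cell are ordered in the way their weights are. -/
lemma step_of_wt {L d : ℕ} {x y : ℕ → ℕ} (hx : IsCut L d x) (hy : IsCut L d y)
    (h : Step x y ∨ Step y x) (hw : wt d x ≤ wt d y) : Step x y := by
  rcases h with h | h
  · exact h
  · rw [eq_of_wt hy hx (fun k => (h k).1) hw]
    exact fun k => ⟨le_rfl, Nat.le_succ _⟩

/-- Along a `Step`, the weight grows by the number of cuts that move. -/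
lemma card_gap {d : ℕ} {x y : ℕ → ℕ} (h : Step x y) :
    ((Finset.Icc 1 d).filter fun k => y k = x k + 1).card + wt d x = wt d y := by
  rw [Finset.card_filter, wt, wt, ← Finset.sum_add_distrib]
  refine Finset.sum_congr rfl fun k _ => ?_
  have := h k
  split_ifs <;> omega

/-- `x + e_j`. -/
def bump (x : ℕ → ℕ) (j : ℕ) : ℕ → ℕ := Function.update x j (x j + 1)

/-- `x - e_j`. -/
def dent (x : ℕ → ℕ) (j : ℕ) : ℕ → ℕ := Function.update x j (x j - 1)

lemma bump_apply (x : ℕ → ℕ) (j k : ℕ) : bump x j k = if k = j then x j + 1 else x k := by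
  simp [bump, Function.update_apply]

lemma dent_apply (x : ℕ → ℕ) (j k : ℕ) : dent x j k = if k = j then x j - 1 else x k := by
  simp [dent, Function.update_apply]

lemma wt_bump {d j : ℕ} (x : ℕ → ℕ) (hj : j ∈ Finset.Icc 1 d) :
    wt d (bump x j) = wt d x + 1 := by
  rw [wt, wt, ← Finset.add_sum_erase _ _ hj, ← Finset.add_sum_erase _ _ hj]
  rw [Finset.sum_congr rfl (g := x)]
  · simp [bump]; ring
  · intro k hk
    simp [bump_apply, (Finset.mem_erase.1 hk).1]

lemma IsCut.bump {L d j : ℕ} {x : ℕ → ℕ} (hx : IsCut L d x) (hj : j ∈ Finset.Icc 1 d)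
    (h : x j < x (j + 1)) : IsCut L d (bump x j) := by
  rw [Finset.mem_Icc] at hj
  refine ⟨?_, monotone_nat_of_le_succ fun k => ?_, fun k hk => ?_⟩
  · rw [bump_apply, if_neg (by omega), hx.zero]
  · have := hx.mono (Nat.le_succ k)
    rw [bump_apply, bump_apply]
    split_ifs <;> subst_vars <;> simp_all <;> omega
  · rw [bump_apply, if_neg (by omega), hx.last k hk]

lemma IsCut.dent {L d j : ℕ} {x : ℕ → ℕ} (hx : IsCut L d x) (hj : j ∈ Finset.Icc 1 d)
    (h : x (j - 1) < x j) : IsCut L d (dent x j) := by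
  rw [Finset.mem_Icc] at hj
  refine ⟨?_, monotone_nat_of_le_succ fun k => ?_, fun k hk => ?_⟩
  · rw [dent_apply, if_neg (by omega), hx.zero]
  · have := hx.mono (Nat.le_succ k)
    rw [dent_apply, dent_apply]
    split_ifs <;> subst_vars <;> simp_all <;> omega
  · rw [dent_apply, if_neg (by omega), hx.last k hk]

/-- `z` completes the facet `F` to a cell. -/
def Completes (L d : ℕ) (F : Finset (ℕ → ℕ)) (z : ℕ → ℕ) : Prop :=
  IsCut L d z ∧ z ∉ F ∧ ∀ x ∈ F, Step x z ∨ Step z x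

/-- A nonempty cell has a least and a greatest vertex. -/
lemma exists_ends {L d : ℕ} {F : Finset (ℕ → ℕ)} (hF : ∀ x ∈ F, IsCut L d x) (hc : IsCell F)
    (hne : F.Nonempty) :
    ∃ a ∈ F, ∃ b ∈ F, ∀ x ∈ F, Step a x ∧ Step x b := by
  obtain ⟨a, ha, hamin⟩ := F.exists_min_image (wt d) hne
  obtain ⟨b, hb, hbmax⟩ := F.exists_max_image (wt d) hne
  exact ⟨a, ha, b, hb, fun x hx =>
    ⟨step_of_wt (hF a ha) (hF x hx) (hc a ha x hx) (hamin x hx),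
      step_of_wt (hF x hx) (hF b hb) (hc x hx b hb) (hbmax x hx)⟩⟩

lemma wt_injOn {L d : ℕ} {F : Finset (ℕ → ℕ)} (hF : ∀ x ∈ F, IsCut L d x) (hc : IsCell F) :
    Set.InjOn (wt d) (F : Set (ℕ → ℕ)) := by
  intro x hx y hy h
  exact eq_of_wt (hF x hx) (hF y hy)
    (fun k => (step_of_wt (hF x hx) (hF y hy) (hc x hx y hy) h.le k).1) h.ge

/-- A facet whose ends `a`, `b` differ in all coordinates but one, `j`, can only be completed at an
end, by `a - e_j` or by `b + e_j`. The second vertex leaves the simplex only if `j = d` and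
`a d = L`. The first never does, as that would make piece `0` empty on the whole facet. -/
lemma completes_outer {L d : ℕ} {F : Finset (ℕ → ℕ)} (hF : ∀ x ∈ F, IsCut L d x)
    (hc : IsCell F) (hcard : F.card = d) (hlab : ∀ i < d, ∃ x ∈ F, x i < x (i + 1))
    {a b : ℕ → ℕ} (ha : a ∈ F) (hb : b ∈ F) (hab : ∀ x ∈ F, Step a x ∧ Step x b)
    (hw : wt d b + 1 = wt d a + d) :
    ∃ j ∈ Finset.Icc 1 d, b j = a j ∧ (∀ k ∈ Finset.Icc 1 d, k ≠ j → b k = a k + 1) ∧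
      Completes L d F (dent a j) ∧ ((j = d ∧ a d = L) ∨ Completes L d F (bump b j)) ∧
      dent a j ≠ bump b j ∧
      ∀ z, Completes L d F z → z = dent a j ∨ z = bump b j := by
  have hA := hF a ha
  have hB := hF b hb
  have hgap := card_gap (d := d) (hab b hb).1
  have h1 : ((Finset.Icc 1 d).filter fun k => ¬ b k = a k + 1).card = 1 := by
    have := Finset.card_filter_add_card_filter_not (s := Finset.Icc 1 d)
      (fun k => b k = a k + 1)
    rw [Nat.card_Icc] at this
    omega
  obtain ⟨j, hj⟩ := Finset.card_eq_one.1 h1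
  have hj1 : j ∈ (Finset.Icc 1 d).filter fun k => ¬ b k = a k + 1 := by simp [hj]
  rw [Finset.mem_filter] at hj1
  obtain ⟨hjd, hbj⟩ := hj1
  have hbj : b j = a j := by have := (hab b hb).1 j; omega
  have hrest : ∀ k ∈ Finset.Icc 1 d, k ≠ j → b k = a k + 1 := by
    intro k hk hkj
    by_contra h
    have : k ∈ ({j} : Finset ℕ) := by rw [← hj]; simp [h, Finset.mem_Icc.1 hk]
    exact hkj (by simpa using this)
  have hout : ∀ k, k ∉ Finset.Icc 1 d → b k = a k := fun k hk => hB.out hA hk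
  have hjd' := Finset.mem_Icc.1 hjd
  have haj : a (j - 1) < a j := by
    by_cases hj1 : j = 1
    · subst hj1
      obtain ⟨x, hx, hlt⟩ := hlab 0 (by omega)
      have h2 := (hab x hx).2 1
      have := hA.zero
      simp at hlt ⊢
      omega
    · have h2 := hrest (j - 1) (by simp; omega) (by omega)
      have h3 := hB.mono (show j - 1 ≤ j by omega)
      omega
  refine ⟨j, hjd, hbj, hrest, ⟨hA.dent hjd haj, ?_, ?_⟩, ?_, ?_, ?_⟩
  · intro hmem
    have := (hab _ hmem).1 j
    rw [dent_apply, if_pos rfl] at this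
    omega
  · intro x hx
    refine Or.inr fun k => ?_
    have h2 := (hab x hx).1 k
    have h3 := (hab x hx).2 k
    rw [dent_apply]
    split_ifs with h
    · subst h; omega
    · omega
  · by_cases hL : j = d ∧ a d = L
    · exact Or.inl hL
    refine Or.inr ⟨hB.bump hjd ?_, ?_, ?_⟩
    · by_cases h : j = d
      · have h2 := hB.last (d + 1) (by omega)
        have h3 := hB.le d
        subst h
        omega
      · have h2 := hrest (j + 1) (by simp; omega) (by omega)
        have h3 := hA.mono (Nat.le_succ j)
        simp at h3
        omega
    · intro hmem
      have := (hab _ hmem).2 j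
      rw [bump_apply, if_pos rfl] at this
      omega
    · intro x hx
      refine Or.inl fun k => ?_
      have h2 := (hab x hx).1 k
      have h3 := (hab x hx).2 k
      rw [bump_apply]
      split_ifs with h
      · subst h; omega
      · omega
  · intro h
    have := congrFun h j
    rw [dent_apply, bump_apply, if_pos rfl, if_pos rfl] at this
    omega
  · rintro z ⟨hz, hzF, hzc⟩
    have himg : F.image (wt d) = Finset.Icc (wt d a) (wt d b) := by
      refine Finset.eq_of_subset_of_card_le ?_ ?_
      · intro w hw
        obtain ⟨x, hx, rfl⟩ := Finset.mem_image.1 hw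
        exact Finset.mem_Icc.2 ⟨wt_mono fun k => ((hab x hx).1 k).1,
          wt_mono fun k => ((hab x hx).2 k).1⟩
      · rw [Finset.card_image_of_injOn (wt_injOn hF hc), Nat.card_Icc]
        omega
    have hne : wt d z ∉ Finset.Icc (wt d a) (wt d b) := by
      rw [← himg]
      intro h
      obtain ⟨x, hx, hxz⟩ := Finset.mem_image.1 h
      have := eq_of_wt (hF x hx) hz
        (fun k => (step_of_wt (hF x hx) hz (hzc x hx) hxz.le k).1) hxz.ge
      exact hzF (this ▸ hx)
    rw [Finset.mem_Icc, not_and_or] at hne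
    rcases hne with h | h
    · left
      have s1 : Step z a := step_of_wt hz hA (hzc a ha).symm (by omega)
      have hab' := wt_mono (d := d) fun k => ((hab b hb).1 k).1
      have s2 : Step z b := step_of_wt hz hB (hzc b hb).symm (by omega)
      have hoff : ∀ k, k ≠ j → z k = a k := by
        intro k hkj
        by_cases hk : k ∈ Finset.Icc 1 d
        · have := hrest k hk hkj
          have := s1 k
          have := s2 k
          omega
        · exact hz.out hA hk
      have hzj : z j ≠ a j := by
        intro h'
        refine hzF ?_
        have : z = a := by
          funext k
          by_cases hk : k = j
          · rw [hk, h']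
          · exact hoff k hk
        rwa [this]
      funext k
      rw [dent_apply]
      split_ifs with hk
      · subst hk
        have := s1 k
        omega
      · exact hoff k hk
    · right
      have hab' := wt_mono (d := d) fun k => ((hab b hb).1 k).1
      have s1 : Step a z := step_of_wt hA hz (hzc a ha) (by omega)
      have s2 : Step b z := step_of_wt hB hz (hzc b hb) (by omega)
      have hoff : ∀ k, k ≠ j → z k = b k := by
        intro k hkj
        by_cases hk : k ∈ Finset.Icc 1 d
        · have := hrest k hk hkj
          have := s1 k
          have := s2 k
          omega
        · exact hz.out hB hk
      have hzj : z j ≠ b j := by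
        intro h'
        refine hzF ?_
        have : z = b := by
          funext k
          by_cases hk : k = j
          · rw [hk, h']
          · exact hoff k hk
        rwa [this]
      funext k
      rw [bump_apply]
      split_ifs with hk
      · subst hk
        have := s2 k
        omega
      · exact hoff k hk

/-- A facet whose ends `a`, `b` differ in all coordinates skips exactly one weight `c`, strictly
between two of its vertices `p` and `q = p + e_i + e_j`. It is completed by `p + e_i` and `p + e_j`;
these are cuts, as otherwise one of the pieces `0, …, d - 1` would be empty on the whole facet. -/
lemma completes_inner {L d : ℕ} {F : Finset (ℕ → ℕ)} (hF : ∀ x ∈ F, IsCut L d x)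
    (hc : IsCell F) (hcard : F.card = d) (hlab : ∀ i < d, ∃ x ∈ F, x i < x (i + 1))
    {a b : ℕ → ℕ} (ha : a ∈ F) (hb : b ∈ F) (hab : ∀ x ∈ F, Step a x ∧ Step x b)
    (hw : wt d b = wt d a + d) :
    ∃ z₁ z₂, z₁ ≠ z₂ ∧ ∀ z, Completes L d F z ↔ z = z₁ ∨ z = z₂ := by
  have hA := hF a ha
  have hB := hF b hb
  have hfull : ∀ k ∈ Finset.Icc 1 d, b k = a k + 1 := by
    have hgap := card_gap (d := d) (hab b hb).1
    refine Finset.filter_eq_self.1 (Finset.eq_of_subset_of_card_le (Finset.filter_subset _ _) ?_)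
    rw [Nat.card_Icc]
    omega
  have hsub : F.image (wt d) ⊆ Finset.Icc (wt d a) (wt d b) := by
    intro w hw
    obtain ⟨x, hx, rfl⟩ := Finset.mem_image.1 hw
    exact Finset.mem_Icc.2 ⟨wt_mono fun k => ((hab x hx).1 k).1,
      wt_mono fun k => ((hab x hx).2 k).1⟩
  have h1 : (Finset.Icc (wt d a) (wt d b) \ F.image (wt d)).card = 1 := by
    rw [Finset.card_sdiff_of_subset hsub, Finset.card_image_of_injOn (wt_injOn hF hc),
      Nat.card_Icc]
    omega
  obtain ⟨c, hcs⟩ := Finset.card_eq_one.1 h1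
  have hc1 : c ∈ Finset.Icc (wt d a) (wt d b) \ F.image (wt d) := by simp [hcs]
  rw [Finset.mem_sdiff, Finset.mem_Icc] at hc1
  obtain ⟨⟨hca, hcb⟩, hcF⟩ := hc1
  have hother : ∀ w, wt d a ≤ w → w ≤ wt d b → w ≠ c → ∃ x ∈ F, wt d x = w := by
    intro w h1 h2 h3
    by_contra h
    have : w ∈ ({c} : Finset ℕ) := by
      rw [← hcs, Finset.mem_sdiff, Finset.mem_Icc, Finset.mem_image]
      exact ⟨⟨h1, h2⟩, h⟩
    exact h3 (by simpa using this)
  have hcx : ∀ x ∈ F, wt d x ≠ c := fun x hx h => hcF (Finset.mem_image.2 ⟨x, hx, h⟩)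
  have hac := hcx a ha
  have hbc := hcx b hb
  obtain ⟨p, hp, hpw⟩ := hother (c - 1) (by omega) (by omega) (by omega)
  obtain ⟨q, hq, hqw⟩ := hother (c + 1) (by omega) (by omega) (by omega)
  have hP := hF p hp
  have hQ := hF q hq
  have hpq : Step p q := step_of_wt hP hQ (hc p hp q hq) (by omega)
  have hgap := card_gap (d := d) hpq
  obtain ⟨i, j, hij, hT⟩ := Finset.card_eq_two.1
    (show ((Finset.Icc 1 d).filter fun k => q k = p k + 1).card = 2 by omega)
  have hmem : ∀ k, (k ∈ Finset.Icc 1 d ∧ q k = p k + 1) ↔ k = i ∨ k = j := by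
    intro k
    have := Finset.ext_iff.1 hT k
    rwa [Finset.mem_filter, Finset.mem_insert, Finset.mem_singleton] at this
  have hoff : ∀ k, k ≠ i → k ≠ j → q k = p k := by
    intro k hi hj
    by_cases hk : k ∈ Finset.Icc 1 d
    · have h2 : ¬ q k = p k + 1 := fun h => by
        rcases (hmem k).1 ⟨hk, h⟩ with h | h <;> contradiction
      have := hpq k
      omega
    · exact hQ.out hP hk
  have key : ∀ k l, k ≠ l → (∀ t, (t ∈ Finset.Icc 1 d ∧ q t = p t + 1) ↔ t = k ∨ t = l) →
      Completes L d F (bump p k) := by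
    intro k l hkl hm
    obtain ⟨hk, hqk⟩ := (hm k).2 (Or.inl rfl)
    obtain ⟨hl, hql⟩ := (hm l).2 (Or.inr rfl)
    have hk' := Finset.mem_Icc.1 hk
    have hl' := Finset.mem_Icc.1 hl
    have hbq : ∀ t, bump p k t ≤ q t := by
      intro t
      have := hpq t
      rw [bump_apply]
      split_ifs with h
      · subst h; omega
      · omega
    have hpb : ∀ t, p t ≤ bump p k t := by
      intro t
      rw [bump_apply]
      split_ifs with h
      · subst h; omega
      · omega
    have hba : ∀ t, b t ≤ a t + 1 := fun t => ((hab b hb).1 t).2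
    refine ⟨hP.bump hk ?_, ?_, ?_⟩
    · by_contra hlt
      have hmq := hQ.mono (Nat.le_succ k)
      have hmp := hP.mono (Nat.le_succ k)
      simp only [Nat.succ_eq_add_one] at hmq hmp
      have hstep := hpq (k + 1)
      have hkd : k < d := by
        by_contra hkd
        have h2 := hQ.last (k + 1) (by omega)
        have h3 := hP.last (k + 1) (by omega)
        omega
      obtain ⟨x, hx, hxk⟩ := hlab k hkd
      have e1 := hfull k hk
      have e2 := hfull (k + 1) (by simp; omega)
      have pa := hab p hp
      have qa := hab q hq
      have p1 := pa.1 k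
      have p2 := pa.2 k
      have p3 := pa.1 (k + 1)
      have p4 := pa.2 (k + 1)
      have q1 := qa.1 k
      have q2 := qa.2 k
      have q3 := qa.1 (k + 1)
      have q4 := qa.2 (k + 1)
      have x1 := (hab x hx).1 k
      have x2 := (hab x hx).2 k
      have x3 := (hab x hx).1 (k + 1)
      have x4 := (hab x hx).2 (k + 1)
      have := hcx x hx
      rcases Nat.lt_or_ge (wt d x) c with h | h
      · have s := step_of_wt (hF x hx) hP (hc x hx p hp) (by omega)
        have := s k
        have := s (k + 1)
        omega
      · have s := step_of_wt hQ (hF x hx) (hc q hq x hx) (by omega)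
        have := s k
        have := s (k + 1)
        omega
    · intro h
      refine hcx _ h ?_
      rw [wt_bump p hk]
      omega
    · intro x hx
      have := hcx x hx
      rcases Nat.lt_or_ge (wt d x) c with h | h
      · have s := step_of_wt (hF x hx) hP (hc x hx p hp) (by omega)
        refine Or.inl fun t => ?_
        have := s t
        have := hpb t
        have := hbq t
        have := (hab q hq).2 t
        have := (hab x hx).1 t
        have := hba t
        omega
      · have s := step_of_wt hQ (hF x hx) (hc q hq x hx) (by omega)
        refine Or.inr fun t => ?_
        have := s t
        have := hpb t
        have := hbq t
        have := (hab p hp).1 t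
        have := (hab x hx).2 t
        have := hba t
        omega
  refine ⟨bump p i, bump p j, ?_, fun z => ⟨?_, ?_⟩⟩
  · intro h
    have := congrFun h i
    rw [bump_apply, bump_apply, if_pos rfl, if_neg hij] at this
    omega
  · rintro ⟨hz, hzF, hzc⟩
    have hne : ∀ x ∈ F, wt d z ≠ wt d x := by
      intro x hx hzx
      have := eq_of_wt (hF x hx) hz
        (fun k => (step_of_wt (hF x hx) hz (hzc x hx) hzx.ge k).1) hzx.le
      exact hzF (this ▸ hx)
    have hba : ∀ t, b t ≤ a t + 1 := fun t => ((hab b hb).1 t).2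
    have haz : wt d a ≤ wt d z := by
      by_contra h
      have s1 : Step z a := step_of_wt hz hA (hzc a ha).symm (by omega)
      have s2 : Step z b := step_of_wt hz hB (hzc b hb).symm (by omega)
      have := wt_le (d := d) s2
      omega
    have hzb : wt d z ≤ wt d b := by
      by_contra h
      have s1 : Step a z := step_of_wt hA hz (hzc a ha) (by omega)
      have := wt_le (d := d) s1
      omega
    have hzw : wt d z = c := by
      by_contra h
      obtain ⟨x, hx, hxw⟩ := hother _ haz hzb h
      exact hne x hx hxw.symm
    have s1 : Step p z := step_of_wt hP hz (hzc p hp) (by omega)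
    have s2 : Step z q := step_of_wt hz hQ (hzc q hq).symm (by omega)
    have hzoff : ∀ k, k ≠ i → k ≠ j → z k = p k := by
      intro k h1 h2
      have := hoff k h1 h2
      have := s1 k
      have := s2 k
      omega
    obtain ⟨hi, hqi⟩ := (hmem i).2 (Or.inl rfl)
    obtain ⟨hj, hqj⟩ := (hmem j).2 (Or.inr rfl)
    have i1 := s1 i
    have i2 := s2 i
    have j1 := s1 j
    have j2 := s2 j
    have hnp : ¬ (z i = p i ∧ z j = p j) := by
      rintro ⟨h1, h2⟩
      have : z = p := by
        funext k
        by_cases hki : k = i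
        · rw [hki, h1]
        · by_cases hkj : k = j
          · rw [hkj, h2]
          · exact hzoff k hki hkj
      exact hzF (this ▸ hp)
    have hnq : ¬ (z i = q i ∧ z j = q j) := by
      rintro ⟨h1, h2⟩
      have : z = q := by
        funext k
        by_cases hki : k = i
        · rw [hki, h1]
        · by_cases hkj : k = j
          · rw [hkj, h2]
          · rw [hzoff k hki hkj, hoff k hki hkj]
      exact hzF (this ▸ hq)
    by_cases hzi : z i = p i
    · right
      funext k
      rw [bump_apply]
      split_ifs with hk
      · subst hk; omega
      · by_cases hki : k = i
        · rw [hki, hzi]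
        · exact hzoff k hki hk
    · left
      funext k
      rw [bump_apply]
      split_ifs with hk
      · subst hk; omega
      · by_cases hkj : k = j
        · subst hkj; omega
        · exact hzoff k hk hkj
  · rintro (rfl | rfl)
    · exact key i j hij hmem
    · exact key j i hij.symm fun t => (hmem t).trans or_comm

/-- The pseudomanifold property: a facet on which none of the pieces `0, …, d - 1` is always empty
has one completion if it lies in the face `x d = L`, and two otherwise. -/
lemma completes_count {L d : ℕ} (hd : 0 < d) {F : Finset (ℕ → ℕ)}
    (hF : ∀ x ∈ F, IsCut L d x)
    (hc : IsCell F) (hcard : F.card = d) (hlab : ∀ i < d, ∃ x ∈ F, x i < x (i + 1)) :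
    ((∀ x ∈ F, x d = L) ∧ ∃ z₁, ∀ z, Completes L d F z ↔ z = z₁) ∨
    ((¬ ∀ x ∈ F, x d = L) ∧
      ∃ z₁ z₂, z₁ ≠ z₂ ∧ ∀ z, Completes L d F z ↔ z = z₁ ∨ z = z₂) := by
  obtain ⟨a, ha, b, hb, hab⟩ := exists_ends hF hc (Finset.card_pos.1 (by omega))
  have hA := hF a ha
  have hB := hF b hb
  have hsub : F.image (wt d) ⊆ Finset.Icc (wt d a) (wt d b) := by
    intro w hw
    obtain ⟨x, hx, rfl⟩ := Finset.mem_image.1 hw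
    exact Finset.mem_Icc.2 ⟨wt_mono fun k => ((hab x hx).1 k).1,
      wt_mono fun k => ((hab x hx).2 k).1⟩
  have h1 := Finset.card_le_card hsub
  rw [Finset.card_image_of_injOn (wt_injOn hF hc), Nat.card_Icc] at h1
  have h2 := wt_le (d := d) (hab b hb).1
  rcases (show wt d b = wt d a + d ∨ wt d b + 1 = wt d a + d by omega) with hw | hw
  · refine Or.inr ⟨fun h => ?_, completes_inner hF hc hcard hlab ha hb hab hw⟩
    have hgap := card_gap (d := d) (hab b hb).1
    have hfull : ∀ k ∈ Finset.Icc 1 d, b k = a k + 1 := by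
      refine Finset.filter_eq_self.1
        (Finset.eq_of_subset_of_card_le (Finset.filter_subset _ _) ?_)
      rw [Nat.card_Icc]
      omega
    have := hfull d (by simp; omega)
    have := h a ha
    have := h b hb
    omega
  · obtain ⟨j, hj, hbj, hrest, hdent, hbump, hne, huniq⟩ :=
      completes_outer hF hc hcard hlab ha hb hab hw
    have hj' := Finset.mem_Icc.1 hj
    by_cases hL : j = d ∧ a d = L
    · left
      obtain ⟨rfl, hL⟩ := hL
      refine ⟨fun x hx => ?_, dent a j, fun z => ⟨fun hz => ?_, ?_⟩⟩
      · have := (hab x hx).1 j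
        have := (hab x hx).2 j
        omega
      · rcases huniq z hz with h | h
        · exact h
        · subst h
          have h3 := hz.1.le j
          rw [bump_apply, if_pos rfl] at h3
          omega
      · rintro rfl
        exact hdent
    · right
      have hbump' := hbump.resolve_left hL
      refine ⟨fun h => ?_, dent a j, bump b j, hne, fun z => ⟨huniq z, ?_⟩⟩
      · have h3 := h a ha
        have h4 := h b hb
        by_cases hjd : j = d
        · exact hL ⟨hjd, h3⟩
        · have := hrest d (by simp; omega) (Ne.symm hjd)
          omega
      · rintro (rfl | rfl)
        · exact hdent
        · exact hbump'

/-! ### Sperner's lemma -/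

lemma finite_cuts (L d : ℕ) : {x | IsCut L d x}.Finite := by
  refine (Set.finite_range fun f : Fin (d + 1) → Fin (L + 1) =>
    fun k : ℕ => if h : k < d + 1 then (f ⟨k, h⟩ : ℕ) else L).subset ?_
  intro x hx
  refine ⟨fun k => ⟨x k, Nat.lt_succ_of_le (IsCut.le hx k)⟩, ?_⟩
  funext k
  dsimp only
  split_ifs with h
  · rfl
  · exact (hx.last k (by omega)).symm

/-- The finite set of all vertices. -/
noncomputable def cuts (L d : ℕ) : Finset (ℕ → ℕ) := (finite_cuts L d).toFinset

lemma mem_cuts {L d : ℕ} {x : ℕ → ℕ} : x ∈ cuts L d ↔ IsCut L d x := by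
  simp [cuts]

open scoped Classical in
/-- The cells with `c` vertices. -/
noncomputable def cells (L d c : ℕ) : Finset (Finset (ℕ → ℕ)) :=
  ((cuts L d).powersetCard c).filter IsCell

lemma mem_cells {L d c : ℕ} {F : Finset (ℕ → ℕ)} :
    F ∈ cells L d c ↔ (∀ x ∈ F, IsCut L d x) ∧ F.card = c ∧ IsCell F := by
  simp only [cells, Finset.mem_filter, Finset.mem_powersetCard, Finset.subset_iff, mem_cuts,
    and_assoc]

/-- The cells with `c` vertices carrying each of the labels `0, …, c - 1` exactly once. -/
noncomputable def rainbow (L d c : ℕ) (lab : (ℕ → ℕ) → ℕ) : Finset (Finset (ℕ → ℕ)) :=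
  (cells L d c).filter fun F => F.image lab = Finset.range c

/-- Double counting modulo two: in a bipartite relation, the two sides have the same parity of
vertices of odd degree. -/
lemma card_mod_two {α β : Type*} (s : Finset α) (t : Finset β) (r : α → β → Prop)
    [∀ a b, Decidable (r a b)] (p : α → Prop) (q : β → Prop) [DecidablePred p] [DecidablePred q]
    (hs : ∀ a ∈ s, (Odd (t.filter fun b => r a b).card ↔ p a))
    (ht : ∀ b ∈ t, (Odd (s.filter fun a => r a b).card ↔ q b)) :
    (Odd (s.filter p).card ↔ Odd (t.filter q).card) := by
  have h := Finset.sum_card_bipartiteAbove_eq_sum_card_bipartiteBelow (s := s) (t := t) r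
  have h1 := Finset.odd_sum_iff_odd_card_odd (s := s)
    (fun a => (Finset.bipartiteAbove r t a).card)
  have h2 := Finset.odd_sum_iff_odd_card_odd (s := t)
    (fun b => (Finset.bipartiteBelow r s b).card)
  rw [h, h2] at h1
  rw [Finset.filter_congr fun a ha => (hs a ha).symm, Finset.filter_congr fun b hb => (ht b hb).symm]
  exact h1.symm

/-- Sperner's lemma for the Kuhn triangulation: if every vertex is labelled by one of its nonempty
pieces, the number of full cells with pairwise distinct labels is odd. -/
theorem odd_rainbow (L : ℕ) (lab : (ℕ → ℕ) → ℕ) (d : ℕ)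
    (hlab : ∀ x, IsCut L d x → x (lab x) < x (lab x + 1)) :
    Odd (rainbow L d (d + 1) lab).card := by
  classical
  have hle : ∀ x, IsCut L d x → lab x < d + 1 := by
    intro x hx
    by_contra h
    have := hlab x hx
    rw [hx.last _ (by omega), hx.last _ (by omega)] at this
    exact lt_irrefl _ this
  induction d with
  | zero =>
    have h0 : ∀ x, IsCut L 0 x ↔ x = fun k => if k = 0 then 0 else L := by
      intro x
      refine ⟨fun hx => ?_, ?_⟩
      · funext k
        split_ifs with hk
        · rw [hk, hx.zero]
        · exact hx.last k (by omega)
      · rintro rfl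
        refine ⟨by simp, monotone_nat_of_le_succ fun k => ?_, fun k hk => ?_⟩
        · simp only [Nat.add_eq_zero_iff, one_ne_zero, and_false, if_false]
          split_ifs <;> omega
        · exact if_neg (by omega)
    have : rainbow L 0 (0 + 1) lab = {{fun k => if k = 0 then 0 else L}} := by
      ext F
      rw [rainbow, Finset.mem_filter, mem_cells, Finset.mem_singleton]
      constructor
      · rintro ⟨⟨h1, h2, -⟩, -⟩
        obtain ⟨x, rfl⟩ := Finset.card_eq_one.1 h2
        rw [(h0 x).1 (h1 x (Finset.mem_singleton_self x))]
      · rintro rfl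
        have hc := (h0 _).2 rfl
        refine ⟨⟨fun x hx => (h0 x).2 (Finset.mem_singleton.1 hx), by simp, ?_⟩, ?_⟩
        · intro x hx y hy
          rw [Finset.mem_singleton.1 hx, Finset.mem_singleton.1 hy]
          exact Or.inl fun k => ⟨le_rfl, Nat.le_succ _⟩
        · have := hle _ hc
          rw [Finset.image_singleton, Finset.range_one, Finset.singleton_inj]
          omega
    rw [this]
    simp
  | succ d ih =>
    have ih' := ih (fun x hx => hlab x hx.up) (fun x hx => by
      have h1 := hlab x hx.up
      by_contra h
      rw [hx.last _ (by omega), hx.last _ (by omega)] at h1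
      exact lt_irrefl _ h1)
    have hdown : rainbow L d (d + 1) lab =
        (rainbow L (d + 1) (d + 1) lab).filter fun F => ∀ x ∈ F, x (d + 1) = L := by
      ext F
      simp only [rainbow, Finset.mem_filter, mem_cells]
      constructor
      · rintro ⟨⟨h1, h2⟩, h3⟩
        exact ⟨⟨⟨fun x hx => (h1 x hx).up, h2⟩, h3⟩,
          fun x hx => (h1 x hx).last _ (Nat.lt_succ_self d)⟩
      · rintro ⟨⟨⟨h1, h2⟩, h3⟩, h4⟩
        refine ⟨⟨fun x hx => ⟨(h1 x hx).zero, (h1 x hx).mono, fun k hk => ?_⟩, h2⟩, h3⟩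
        by_cases hkd : k = d + 1
        · rw [hkd, h4 x hx]
        · exact (h1 x hx).last k (by omega)
    rw [hdown] at ih'
    -- Count the pairs of a door (a facet labelled `0, …, d`) and a full cell containing it: the doors
    -- of odd degree are those on the face `x (d + 1) = L`, the cells of odd degree the rainbow ones.
    refine (card_mod_two (rainbow L (d + 1) (d + 1) lab) (cells L (d + 1) (d + 1 + 1))
      (fun F S => F ⊆ S) (fun F => ∀ x ∈ F, x (d + 1) = L)
      (fun S => S.image lab = Finset.range (d + 1 + 1)) ?_ ?_).1 ih'
    · intro F hF
      rw [rainbow, Finset.mem_filter, mem_cells] at hF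
      obtain ⟨⟨hcut, hcard, hcell⟩, himg⟩ := hF
      have hl : ∀ i < d + 1, ∃ x ∈ F, x i < x (i + 1) := by
        intro i hi
        rw [← Finset.mem_range, ← himg, Finset.mem_image] at hi
        obtain ⟨x, hx, rfl⟩ := hi
        exact ⟨x, hx, hlab x (hcut x hx)⟩
      have hS : ∀ S, (S ∈ cells L (d + 1) (d + 1 + 1) ∧ F ⊆ S) ↔
          ∃ z, Completes L (d + 1) F z ∧ insert z F = S := by
        intro S
        rw [mem_cells]
        constructor
        · rintro ⟨⟨h1, h2, h3⟩, hFS⟩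
          obtain ⟨z, hz, rfl⟩ := Finset.exists_eq_insert_iff.2 ⟨hFS, by omega⟩
          exact ⟨z, ⟨h1 z (Finset.mem_insert_self z F), hz, fun x hx =>
            h3 x (Finset.mem_insert_of_mem hx) z (Finset.mem_insert_self z F)⟩, rfl⟩
        · rintro ⟨z, ⟨h1, h2, h3⟩, rfl⟩
          refine ⟨⟨?_, by rw [Finset.card_insert_of_notMem h2, hcard], ?_⟩,
            Finset.subset_insert z F⟩
          · intro x hx
            rcases Finset.mem_insert.1 hx with rfl | hx
            exacts [h1, hcut x hx]
          · intro x hx y hy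
            rcases Finset.mem_insert.1 hx with hxz | hxF <;>
              rcases Finset.mem_insert.1 hy with hyz | hyF
            · rw [hxz, hyz]
              exact Or.inl fun k => ⟨le_rfl, Nat.le_succ _⟩
            · rw [hxz]
              exact (h3 y hyF).symm
            · rw [hyz]
              exact h3 x hxF
            · exact hcell x hxF y hyF
      rcases completes_count (Nat.succ_pos d) hcut hcell hcard hl with
        ⟨hb, z₁, hz⟩ | ⟨hb, z₁, z₂, hne, hz⟩
      · have : ((cells L (d + 1) (d + 1 + 1)).filter fun S => F ⊆ S) = {insert z₁ F} := by
          ext S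
          rw [Finset.mem_filter, hS, Finset.mem_singleton]
          simp only [hz, exists_eq_left]
          exact eq_comm
        rw [this, Finset.card_singleton]
        exact iff_of_true odd_one hb
      · have hz1 := (hz z₁).2 (Or.inl rfl)
        have : ((cells L (d + 1) (d + 1 + 1)).filter fun S => F ⊆ S) =
            {insert z₁ F, insert z₂ F} := by
          ext S
          rw [Finset.mem_filter, hS, Finset.mem_insert, Finset.mem_singleton]
          constructor
          · rintro ⟨z, h, rfl⟩
            rcases (hz z).1 h with rfl | rfl
            exacts [Or.inl rfl, Or.inr rfl]
          · rintro (rfl | rfl)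
            exacts [⟨z₁, hz1, rfl⟩, ⟨z₂, (hz z₂).2 (Or.inr rfl), rfl⟩]
        rw [this, Finset.card_pair]
        · exact iff_of_false (by decide) hb
        · intro h
          have h1 : z₁ ∈ insert z₂ F := h ▸ Finset.mem_insert_self z₁ F
          rcases Finset.mem_insert.1 h1 with h1 | h1
          exacts [hne h1, hz1.2.1 h1]
    · intro S hS
      rw [mem_cells] at hS
      obtain ⟨hcut, hcard, hcell⟩ := hS
      have hF : ∀ F, (F ∈ rainbow L (d + 1) (d + 1) lab ∧ F ⊆ S) ↔
          ∃ z ∈ S, (S.erase z).image lab = Finset.range (d + 1) ∧ S.erase z = F := by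
        intro F
        rw [rainbow, Finset.mem_filter, mem_cells]
        constructor
        · rintro ⟨⟨⟨h1, h2, h3⟩, h4⟩, hFS⟩
          obtain ⟨z, hz, rfl⟩ := Finset.exists_eq_insert_iff.2 ⟨hFS, by omega⟩
          refine ⟨z, Finset.mem_insert_self z F, ?_, ?_⟩ <;> rw [Finset.erase_insert hz]
          exact h4
        · rintro ⟨z, hz, h, rfl⟩
          refine ⟨⟨⟨fun x hx => hcut x (Finset.mem_of_mem_erase hx), ?_, ?_⟩, h⟩,
            Finset.erase_subset z S⟩
          · rw [Finset.card_erase_of_mem hz, hcard]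
            rfl
          · exact fun x hx y hy =>
              hcell x (Finset.mem_of_mem_erase hx) y (Finset.mem_of_mem_erase hy)
      -- A rainbow cell has one door, opposite to its vertex labelled `d + 1`. Another cell with a
      -- door has exactly two, opposite to the two vertices that share a label.
      by_cases hfull : S.image lab = Finset.range (d + 1 + 1)
      · have hinj : Set.InjOn lab (S : Set (ℕ → ℕ)) := by
          refine Finset.card_image_iff.1 ?_
          rw [hfull, hcard, Finset.card_range]
        obtain ⟨z, hz, hzl⟩ := Finset.mem_image.1
          (show d + 1 ∈ S.image lab by rw [hfull]; simp)
        have : ((rainbow L (d + 1) (d + 1) lab).filter fun F => F ⊆ S) = {S.erase z} := by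
          ext F
          rw [Finset.mem_filter, hF, Finset.mem_singleton]
          constructor
          · rintro ⟨y, hy, h, rfl⟩
            by_cases hyz : y = z
            · rw [hyz]
            · have : lab z ∈ (S.erase y).image lab :=
                Finset.mem_image_of_mem _ (Finset.mem_erase.2 ⟨Ne.symm hyz, hz⟩)
              rw [h, hzl] at this
              simp at this
          · rintro rfl
            refine ⟨z, hz, ?_, rfl⟩
            refine Finset.eq_of_subset_of_card_le ?_ ?_
            · intro l hl
              obtain ⟨y, hy, rfl⟩ := Finset.mem_image.1 hl
              rw [Finset.mem_erase] at hy
              have h1 := hle y (hcut y hy.2)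
              have h2 : lab y ≠ d + 1 := fun h => hy.1 (hinj hy.2 hz (h.trans hzl.symm))
              rw [Finset.mem_range]
              omega
            · rw [Finset.card_image_of_injOn (hinj.mono (by simp)), Finset.card_erase_of_mem hz,
                hcard, Finset.card_range]
              rfl
        rw [this]
        simpa using hfull
      · simp only [hfull, iff_false, Nat.not_odd_iff_even]
        by_cases hex : ∃ z ∈ S, (S.erase z).image lab = Finset.range (d + 1)
        · obtain ⟨z, hz, hzi⟩ := hex
          have hcz : (S.erase z).card = d + 1 := by
            rw [Finset.card_erase_of_mem hz, hcard]
            rfl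
          have hinj : Set.InjOn lab (S.erase z : Finset (ℕ → ℕ)) := by
            refine Finset.card_image_iff.1 ?_
            rw [hzi, hcz, Finset.card_range]
          have hlz : lab z ∈ (S.erase z).image lab := by
            have h1 := hle z (hcut z hz)
            rw [hzi, Finset.mem_range]
            by_contra h
            refine hfull ?_
            rw [← Finset.insert_erase hz, Finset.image_insert, hzi, Finset.range_add_one (n := d + 1)]
            congr 1
            omega
          obtain ⟨y, hy, hyz⟩ := Finset.mem_image.1 hlz
          have hy' := Finset.mem_erase.1 hy
          have : ((rainbow L (d + 1) (d + 1) lab).filter fun F => F ⊆ S) =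
              {S.erase z, S.erase y} := by
            ext F
            rw [Finset.mem_filter, hF, Finset.mem_insert, Finset.mem_singleton]
            constructor
            · rintro ⟨w, hw, h, rfl⟩
              by_contra hn
              rw [not_or] at hn
              have hwz : w ≠ z := fun e => hn.1 (by rw [e])
              have hwy : w ≠ y := fun e => hn.2 (by rw [e])
              have hi : Set.InjOn lab (S.erase w : Finset (ℕ → ℕ)) := by
                refine Finset.card_image_iff.1 ?_
                rw [h, Finset.card_erase_of_mem hw, hcard, Finset.card_range]
                rfl
              exact hy'.1 (hi (Finset.mem_coe.2 (Finset.mem_erase.2 ⟨hwy.symm, hy'.2⟩))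
                (Finset.mem_coe.2 (Finset.mem_erase.2 ⟨hwz.symm, hz⟩)) hyz)
            · rintro (rfl | rfl)
              · exact ⟨z, hz, hzi, rfl⟩
              · refine ⟨y, hy'.2, ?_, rfl⟩
                rw [← hzi]
                have e : ∀ u w : ℕ → ℕ, u ∈ S → u ≠ w → lab u = lab w →
                    (S.erase w).image lab = S.image lab := by
                  intro u w hu huw hl
                  refine (Finset.image_subset_image (Finset.erase_subset _ _)).antisymm ?_
                  intro l hl'
                  obtain ⟨t, ht, rfl⟩ := Finset.mem_image.1 hl'
                  by_cases htw : t = w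
                  · exact Finset.mem_image.2 ⟨u, Finset.mem_erase.2 ⟨huw, hu⟩, by rw [hl, htw]⟩
                  · exact Finset.mem_image_of_mem _ (Finset.mem_erase.2 ⟨htw, ht⟩)
                rw [e z y hz hy'.1.symm hyz.symm, e y z hy'.2 hy'.1 hyz]
          rw [this, Finset.card_pair]
          · decide
          · intro h
            have : y ∈ S.erase y := h ▸ hy
            simp at this
        · have : ((rainbow L (d + 1) (d + 1) lab).filter fun F => F ⊆ S) = ∅ := by
            ext F
            rw [Finset.mem_filter, hF]
            simp only [Finset.notMem_empty, iff_false]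
            rintro ⟨z, hz, h, -⟩
            exact hex ⟨z, hz, h⟩
          rw [this]
          simp

/-! ### Virtual values and rounding -/

lemma vplus_Icc (v : Finset ℕ → ℤ) {a b : ℕ} (ha : 1 ≤ a) (hab : a ≤ b) :
    vplus v (Finset.Icc a b) =
      max (v (Finset.Icc a b)) (max (v (Finset.Icc (a + 1) b)) (v (Finset.Icc a (b - 1)))) := by
  have hne : (Finset.Icc a b).Nonempty := Finset.nonempty_Icc.2 hab
  have hmin : (Finset.Icc a b).min' hne = a :=
    le_antisymm (Finset.min'_le _ _ (Finset.left_mem_Icc.2 hab))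
      (Finset.le_min' _ _ _ fun y hy => (Finset.mem_Icc.1 hy).1)
  have hmax : (Finset.Icc a b).max' hne = b :=
    le_antisymm (Finset.max'_le _ _ _ fun y hy => (Finset.mem_Icc.1 hy).2)
      (Finset.le_max' _ _ (Finset.right_mem_Icc.2 hab))
  rw [vplus, dif_pos hne, hmin, hmax]
  congr 3 <;> ext k <;> simp only [Finset.mem_erase, Finset.mem_Icc] <;> omega

lemma le_vplus {v : Finset ℕ → ℤ} (h0 : v ∅ = 0) (A : Finset ℕ) : v A ≤ vplus v A := by
  rw [vplus]
  split_ifs with h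
  · exact le_max_left _ _
  · rw [Finset.not_nonempty_iff_eq_empty.1 h, h0]

/-- The virtual value of the piece between the fine positions `p ≤ q`, with `N` positions per item:
`p / N + 1` and `q / N + 1` are the items cut at the two ends, and `p % N`, `q % N` the fractions at
which they are cut. -/
noncomputable def val (v : Finset ℕ → ℤ) (N p q : ℕ) : ℤ :=
  if p / N = q / N then 0
  else if p % N < q % N then
    max (v (Finset.Icc (p / N + 1) (q / N))) (v (Finset.Icc (p / N + 2) (q / N + 1)))
  else v (Finset.Icc (p / N + 2) (q / N))

lemma add_div_cases {N p e : ℕ} (he : e < N) :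
    ((p + e) / N = p / N ∧ p % N + e < N) ∨ ((p + e) / N = p / N + 1 ∧ N ≤ p % N + e) := by
  have hN : 0 < N := by omega
  have hp := Nat.div_add_mod p N
  have hm := Nat.mod_lt p hN
  have h : (p + e) / N = p / N + (p % N + e) / N := by
    conv_lhs => rw [← hp, add_assoc, Nat.mul_add_div hN]
  rcases Nat.lt_or_ge (p % N + e) N with hlt | hge
  · left
    rw [h, Nat.div_eq_of_lt hlt]
    exact ⟨rfl, hlt⟩
  · right
    have h1 : (p % N + e) / N = 1 := Nat.div_eq_of_lt_le (by omega) (by omega)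
    rw [h, h1]
    exact ⟨rfl, hge⟩

section Val

variable {m N : ℕ} {v : Finset ℕ → ℤ}

lemma val_nonpos (h0 : v ∅ = 0)
    (hmono : ∀ S T : Finset ℕ, S ⊆ T → T ⊆ Finset.Icc 1 m → v T ≤ v S)
    {p q : ℕ} (hq : q ≤ N * m) : val v N p q ≤ 0 := by
  have hle : q / N ≤ m := Nat.div_le_of_le_mul hq
  -- A positive fraction at `q` means that item `q / N + 1` exists.
  have hlt : 0 < q % N → q / N < m := by
    intro h
    by_contra hc
    have := Nat.mul_le_mul_left N (not_lt.1 hc)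
    have := Nat.div_add_mod q N
    omega
  have key : ∀ T : Finset ℕ, T ⊆ Finset.Icc 1 m → v T ≤ 0 := by
    intro T hT
    rw [← h0]
    exact hmono _ _ (Finset.empty_subset T) hT
  rw [val]
  split_ifs with h1 h2
  · exact le_rfl
  · have := hlt (by omega)
    exact max_le (key _ (Finset.Icc_subset_Icc (Nat.le_add_left _ _) (by omega)))
      (key _ (Finset.Icc_subset_Icc (Nat.le_add_left _ _) (by omega)))
  · exact key _ (Finset.Icc_subset_Icc (Nat.le_add_left _ _) hle)

/-- Rounding with a common shift turns a piece into a bundle `A` with `v A ≤ val ≤ v⁺(A)`. -/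
lemma val_bounds (h0 : v ∅ = 0)
    (hmono : ∀ S T : Finset ℕ, S ⊆ T → T ⊆ Finset.Icc 1 m → v T ≤ v S)
    {p q e : ℕ} (he : e < N) (hpq : p ≤ q) (hq : q ≤ N * m) :
    v (Finset.Icc ((p + e) / N + 1) ((q + e) / N)) ≤ val v N p q ∧
      val v N p q ≤ vplus v (Finset.Icc ((p + e) / N + 1) ((q + e) / N)) := by
  have hN : 0 < N := by omega
  have hle : q / N ≤ m := Nat.div_le_of_le_mul hq
  -- A positive fraction at `q` means that item `q / N + 1` exists.
  have hlt : 0 < q % N → q / N < m := by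
    intro h
    by_contra hc
    have := Nat.mul_le_mul_left N (not_lt.1 hc)
    have := Nat.div_add_mod q N
    omega
  have hcd : p / N ≤ q / N := Nat.div_le_div_right hpq
  have hmod : p / N = q / N → p % N ≤ q % N := by
    intro h
    have h1 := Nat.div_add_mod p N
    have h2 := Nat.div_add_mod q N
    rw [h] at h1
    omega
  have hA := le_vplus h0 (Finset.Icc ((p + e) / N + 1) ((q + e) / N))
  have hp' := add_div_cases (p := p) he
  have hq' := add_div_cases (p := q) he
  have hmp := Nat.mod_lt p hN
  have hmq := Nat.mod_lt q hN
  rw [val]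
  generalize p / N = c at *
  generalize q / N = d at *
  generalize p % N = α at *
  generalize q % N = β at *
  generalize (p + e) / N = r at *
  generalize (q + e) / N = s at *
  have sub : ∀ {a b a' b' : ℕ}, a' ≤ a → b ≤ b' → 1 ≤ a' → b' ≤ m →
      v (Finset.Icc a' b') ≤ v (Finset.Icc a b) := fun h1 h2 h3 h4 =>
    hmono _ _ (Finset.Icc_subset_Icc h1 h2) (Finset.Icc_subset_Icc h3 h4)
  have nonpos : ∀ {a b : ℕ}, 1 ≤ a → b ≤ m → v (Finset.Icc a b) ≤ 0 := fun h1 h2 => by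
    rw [← h0]
    exact hmono _ _ (Finset.empty_subset _) (Finset.Icc_subset_Icc h1 h2)
  split_ifs with h1 h2
  · subst h1
    have := hmod rfl
    refine ⟨nonpos (by omega) (by omega), ?_⟩
    by_cases hrs : r + 1 ≤ s
    · rw [vplus_Icc v (by omega) hrs, Finset.Icc_eq_empty (by omega : ¬ r + 1 + 1 ≤ s), h0]
      exact le_max_of_le_right (le_max_left _ _)
    · rw [Finset.Icc_eq_empty hrs, vplus, dif_neg (by simp)]
  · have := hlt (by omega)
    rcases hp' with ⟨hr, hr'⟩ | ⟨hr, hr'⟩ <;> rcases hq' with ⟨hs, hs'⟩ | ⟨hs, hs'⟩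
    · subst hr hs
      refine ⟨le_max_left _ _, ?_⟩
      rw [vplus_Icc v (by omega) (by omega)]
      refine max_le (le_max_left _ _) (le_max_of_le_right (le_max_of_le_left ?_))
      exact sub (by omega) (by omega) (by omega) (by omega)
    · subst hr hs
      refine ⟨le_max_of_le_left (sub (by omega) (by omega) (by omega) (by omega)), ?_⟩
      rw [vplus_Icc v (by omega) (by omega)]
      exact max_le (le_max_of_le_right (le_max_right _ _))
        (le_max_of_le_right (le_max_left _ _))
    · omega
    · subst hr hs
      refine ⟨le_max_right _ _, ?_⟩
      rw [vplus_Icc v (by omega) (by omega)]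
      refine max_le (le_max_of_le_right (le_max_of_le_right ?_)) (le_max_left _ _)
      exact sub (by omega) (by omega) (by omega) (by omega)
  · rcases hp' with ⟨hr, hr'⟩ | ⟨hr, hr'⟩ <;> rcases hq' with ⟨hs, hs'⟩ | ⟨hs, hs'⟩
    · subst hr hs
      refine ⟨sub (by omega) (by omega) (by omega) (by omega), ?_⟩
      rw [vplus_Icc v (by omega) (by omega)]
      exact le_max_of_le_right (le_max_left _ _)
    · omega
    · subst hr hs
      exact ⟨le_rfl, hA⟩
    · have := hlt (by omega)
      subst hr hs
      refine ⟨sub (by omega) (by omega) (by omega) (by omega), ?_⟩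
      rw [vplus_Icc v (by omega) (by omega)]
      exact le_max_of_le_right (le_max_right _ _)

end Val

lemma mono_of_chores {n m : ℕ} {v : Fin n → Finset ℕ → ℤ}
    (hchores : ∀ x ∈ Finset.Icc 1 m, IsChore m v x) (i : Fin n) (S T : Finset ℕ)
    (hST : S ⊆ T) (hT : T ⊆ Finset.Icc 1 m) : v i T ≤ v i S := by
  induction T using Finset.strongInduction with
  | H T ih =>
    by_cases h : S = T
    · rw [h]
    · obtain ⟨x, hxT, hxS⟩ := Finset.exists_of_ssubset (hST.ssubset_of_ne h)
      exact (hchores x (hT hxT) i T hT hxT).trans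
        (ih _ (Finset.erase_ssubset hxT) (Finset.subset_erase.2 ⟨hST, hxS⟩)
          ((Finset.erase_subset x T).trans hT))

/-! ### Labels and the common shift -/

/-- If empty pieces are best pieces, some best piece has a nonempty cyclic successor. -/
lemma exists_choice {n L : ℕ} (hn : 0 < n) (hL : 0 < L) {x : ℕ → ℕ} (hx : IsCut L (n - 1) x)
    (u : ℕ → ℤ) (hu : ∀ k, u k ≤ 0) (hu0 : ∀ k, x k = x (k + 1) → u k = 0) :
    ∃ k < n, (∀ j, j < n → u j ≤ u k) ∧ x ((k + 1) % n) < x ((k + 1) % n + 1) := by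
  by_cases hall : ∀ k < n, x k < x (k + 1)
  · obtain ⟨k, hk, hmax⟩ := (Finset.range n).exists_max_image u ⟨0, by simpa using hn⟩
    exact ⟨k, Finset.mem_range.1 hk, fun j hj => hmax j (Finset.mem_range.2 hj),
      hall _ (Nat.mod_lt _ hn)⟩
  · push Not at hall
    obtain ⟨k₀, hk₀, hle⟩ := hall
    have hempty : ∀ k, ¬ x k < x (k + 1) → x k = x (k + 1) := fun k h =>
      le_antisymm (hx.mono (Nat.le_succ k)) (not_lt.1 h)
    have hk₀e := hempty k₀ (not_lt.2 hle)
    by_contra hno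
    push Not at hno
    have step : ∀ k < n, x k = x (k + 1) → x ((k + 1) % n) = x ((k + 1) % n + 1) := by
      intro k hk he
      refine hempty _ (not_lt.2 (hno k hk fun j _ => ?_))
      rw [hu0 k he]
      exact hu j
    -- If every empty piece were followed by an empty one, all pieces would be empty.
    have walk : ∀ t, x ((k₀ + t) % n) = x ((k₀ + t) % n + 1) := by
      intro t
      induction t with
      | zero => rwa [add_zero, Nat.mod_eq_of_lt hk₀]
      | succ t ih =>
        have := step _ (Nat.mod_lt _ hn) ih
        rwa [Nat.mod_add_mod, add_assoc] at this
    have hall : ∀ k < n, x k = x (k + 1) := by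
      intro k hk
      have := walk (n - k₀ + k)
      rwa [show k₀ + (n - k₀ + k) = k + n by omega, Nat.add_mod_right, Nat.mod_eq_of_lt hk] at this
    have hconst : ∀ k ≤ n, x k = 0 := by
      intro k
      induction k with
      | zero => exact fun _ => hx.zero
      | succ k ih => exact fun hk => by rw [← hall k (by omega), ih (by omega)]
    have := hconst n le_rfl
    rw [hx.last n (by omega)] at this
    omega

/-- Some shift rounds all vertices of a cell alike: each of the `n - 1` moving cuts rules out at most
one of the `n` shifts. -/
lemma exists_shift {n L : ℕ} (hn : 0 < n) {S : Finset (ℕ → ℕ)} {a : ℕ → ℕ}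
    (hS : ∀ x ∈ S, IsCut L (n - 1) x) (ha : a ∈ S) (hstep : ∀ x ∈ S, Step a x) :
    ∃ e < n, ∀ x ∈ S, ∀ k, (x k + e) / n = (a k + e) / n := by
  -- `(a k + e) / n` and `(a k + 1 + e) / n` differ only if `n ∣ a k + e + 1`.
  have hgood : ∃ e < n, ∀ k ∈ Finset.Icc 1 (n - 1), ¬ n ∣ a k + e + 1 := by
    by_contra hno
    push Not at hno
    choose! f hf hdvd using hno
    obtain ⟨e, he, e', he', hne, heq⟩ := Finset.exists_ne_map_eq_of_card_lt_of_maps_to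
      (s := Finset.range n) (t := Finset.Icc 1 (n - 1)) (f := f)
      (by rw [Nat.card_Icc, Finset.card_range]; omega)
      (fun e he => Finset.mem_coe.2 (hf e (Finset.mem_range.1 (Finset.mem_coe.1 he))))
    rw [Finset.mem_range] at he he'
    have h1 := hdvd e he
    have h2 := hdvd e' he'
    rw [← heq] at h2
    rcases Nat.lt_or_gt_of_ne hne with h | h
    · have h3 := (Nat.dvd_sub h2 h1)
      have := Nat.le_of_dvd (by omega) h3
      omega
    · have h3 := (Nat.dvd_sub h1 h2)
      have := Nat.le_of_dvd (by omega) h3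
      omega
  obtain ⟨e, he, hg⟩ := hgood
  refine ⟨e, he, fun x hx k => ?_⟩
  by_cases hk : k ∈ Finset.Icc 1 (n - 1)
  · have := hstep x hx k
    rcases (show x k = a k ∨ x k = a k + 1 by omega) with h | h
    · rw [h]
    · rw [h, add_right_comm, Nat.succ_div_of_not_dvd (hg k hk)]
  · rw [(hS x hx).out (hS a ha) hk]

end PathEF1

/-! ### The allocation -/

/-- For every instance with monotone non-increasing valuations (every item is a
chore) there is a connected allocation that is `EF1P`:
`v_i⁺(A_i) ≥ v_i(A_j)` for all agents `i, j`. -/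
theorem ef1p_exists_nonincreasing (n m : ℕ) (hn : 0 < n)
    (v : Fin n → Finset ℕ → ℤ) (hv0 : ∀ i, v i ∅ = 0)
    (hchores : ∀ x ∈ Finset.Icc 1 m, IsChore m v x) :
    ∃ A : Fin n → Finset ℕ,
      IsAllocation m A ∧ (∀ i, IsConnectedBundle (A i)) ∧
      ∀ i j : Fin n, v i (A j) ≤ vplus (v i) (A i) := by
  classical
  open PathEF1 in
  rcases Nat.eq_zero_or_pos m with rfl | hm
  · refine ⟨fun _ => ∅, ⟨by simp, by ext; simp⟩, fun _ => ⟨1, 0, by simp⟩, fun i j => ?_⟩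
    exact le_vplus (hv0 i) ∅
  have hmono := fun i => mono_of_chores hchores i
  have hL : 0 < n * m := Nat.mul_pos hn hm
  have hchoice : ∀ (i : Fin n) (x : ℕ → ℕ), ∃ k, IsCut (n * m) (n - 1) x → k < n ∧
      (∀ j, j < n → val (v i) n (x j) (x (j + 1)) ≤ val (v i) n (x k) (x (k + 1))) ∧
      x ((k + 1) % n) < x ((k + 1) % n + 1) := by
    intro i x
    by_cases hx : IsCut (n * m) (n - 1) x
    · obtain ⟨k, hk⟩ := exists_choice hn hL hx (fun k => val (v i) n (x k) (x (k + 1)))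
        (fun k => val_nonpos (hv0 i) (hmono i) (hx.le _))
        (fun k hk => by simp only [val, hk, if_true])
      exact ⟨k, fun _ => hk⟩
    · exact ⟨0, fun h => absurd h hx⟩
  choose ch hch using hchoice
  let owner : (ℕ → ℕ) → Fin n := fun x => ⟨wt (n - 1) x % n, Nat.mod_lt _ hn⟩
  let lab : (ℕ → ℕ) → ℕ := fun x => (ch (owner x) x + 1) % n
  have hodd := odd_rainbow (n * m) lab (n - 1) fun x hx => (hch (owner x) x hx).2.2
  obtain ⟨S, hS⟩ := Finset.card_pos.1 hodd.pos
  rw [rainbow, Finset.mem_filter, mem_cells] at hS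
  obtain ⟨⟨hcut, hcard, hcell⟩, himg⟩ := hS
  have hlabinj : Set.InjOn lab (S : Set (ℕ → ℕ)) :=
    Finset.card_image_iff.1 (by rw [himg, hcard, Finset.card_range])
  obtain ⟨a, ha, b, hb, hab⟩ := exists_ends hcut hcell (Finset.card_pos.1 (by omega))
  have howner : Set.InjOn owner (S : Set (ℕ → ℕ)) := by
    intro x hx y hy hxy
    have hmod : wt (n - 1) x ≡ wt (n - 1) y [MOD n] := congrArg Fin.val hxy
    refine wt_injOn hcut hcell hx hy ?_
    have h1 : ∀ z ∈ S, wt (n - 1) a ≤ wt (n - 1) z ∧ wt (n - 1) z < wt (n - 1) a + n :=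
      fun z hz => ⟨wt_mono fun k => ((hab z hz).1 k).1, by
        have := wt_le (d := n - 1) (hab z hz).1
        omega⟩
    have hx1 := h1 x hx
    have hy1 := h1 y hy
    rcases le_total (wt (n - 1) x) (wt (n - 1) y) with h | h
    · have := Nat.eq_zero_of_dvd_of_lt ((Nat.modEq_iff_dvd' h).1 hmod) (by omega)
      omega
    · have := Nat.eq_zero_of_dvd_of_lt ((Nat.modEq_iff_dvd' h).1 hmod.symm) (by omega)
      omega
  have hsurj : ∀ i : Fin n, ∃ x ∈ S, owner x = i := by
    intro i
    have h : S.image owner = Finset.univ := by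
      rw [← Finset.card_eq_iff_eq_univ, Finset.card_image_of_injOn howner, hcard,
        Fintype.card_fin]
      omega
    exact Finset.mem_image.1 (h ▸ Finset.mem_univ i)
  choose X hX hXo using hsurj
  obtain ⟨e, he, hshift⟩ := exists_shift hn hcut ha fun x hx => (hab x hx).1
  have hspec := fun i => hch i (X i) (hcut _ (hX i))
  let σ : Fin n → Fin n := fun i => ⟨ch i (X i), (hspec i).1⟩
  have hσ : Function.Injective σ := by
    intro i j hij
    have h1 : ch i (X i) = ch j (X j) := congrArg Fin.val hij
    have h2 : lab (X i) = lab (X j) := by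
      change (ch (owner (X i)) (X i) + 1) % n = (ch (owner (X j)) (X j) + 1) % n
      rw [hXo, hXo, h1]
    rw [← hXo i, ← hXo j, hlabinj (hX i) (hX j) h2]
  have hσs : Function.Surjective σ := Finite.injective_iff_surjective.1 hσ
  let ρ : ℕ → ℕ := fun k => (a k + e) / n
  have hA := hcut a ha
  have hρ : Monotone ρ := fun k l hkl =>
    Nat.div_le_div_right (Nat.add_le_add_right (hA.mono hkl) e)
  have hρ0 : ρ 0 = 0 := by
    change (a 0 + e) / n = 0
    rw [hA.zero, zero_add, Nat.div_eq_of_lt he]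
  have hρn : ρ n = m := by
    change (a n + e) / n = m
    rw [hA.last n (by omega), Nat.mul_add_div hn, Nat.div_eq_of_lt he, add_zero]
  refine ⟨fun i => Finset.Icc (ρ (σ i) + 1) (ρ (σ i + 1)), ⟨fun i j hij => ?_, ?_⟩,
    fun i => ⟨_, _, rfl⟩, fun i j => ?_⟩
  · have hne : (σ i : ℕ) ≠ σ j := fun h => hij (hσ (Fin.ext h))
    rw [Finset.disjoint_left]
    intro t h1 h2
    rw [Finset.mem_Icc] at h1 h2
    rcases Nat.lt_or_gt_of_ne hne with h | h
    · have := hρ (show (σ i : ℕ) + 1 ≤ σ j from h)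
      omega
    · have := hρ (show (σ j : ℕ) + 1 ≤ σ i from h)
      omega
  · ext t
    simp only [Finset.mem_biUnion, Finset.mem_univ, true_and, Finset.mem_Icc]
    constructor
    · rintro ⟨i, h1, h2⟩
      have := hρ (show (σ i : ℕ) + 1 ≤ n from (σ i).2)
      omega
    · rintro ⟨h1, h2⟩
      have hex : ∃ k, t ≤ ρ k := ⟨n, by omega⟩
      obtain ⟨k, hk⟩ : ∃ k, Nat.find hex = k + 1 := Nat.exists_eq_succ_of_ne_zero fun h => by
        have := Nat.find_spec hex
        rw [h, hρ0] at this
        omega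
      have hkn : k < n := by
        have := Nat.find_min' hex (show t ≤ ρ n by omega)
        omega
      obtain ⟨i, hi⟩ := hσs ⟨k, hkn⟩
      have hik : (σ i : ℕ) = k := congrArg Fin.val hi
      refine ⟨i, ?_, ?_⟩
      · have := Nat.find_min hex (show k < Nat.find hex by omega)
        rw [hik]
        omega
      · have := Nat.find_spec hex
        rwa [hik, ← hk]
  · have hXi := hcut _ (hX i)
    have hb : ∀ k, v i (Finset.Icc (ρ k + 1) (ρ (k + 1))) ≤
        val (v i) n (X i k) (X i (k + 1)) ∧
        val (v i) n (X i k) (X i (k + 1)) ≤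
          vplus (v i) (Finset.Icc (ρ k + 1) (ρ (k + 1))) := by
      intro k
      have := val_bounds (hv0 i) (hmono i) he (hXi.mono (Nat.le_succ k)) (hXi.le _)
      rwa [hshift _ (hX i), hshift _ (hX i)] at this
    exact (hb (σ j)).1.trans (((hspec i).2.1 _ (σ j).2).trans (hb (σ i)).2)
end

section
/- Multi-coloring Sperner's Lemma: let n ≥ 2, let K be a triangulation of the standard (n−1)-simplex Δ ⊂ ℝ^n, and let ℒ be a special multi-coloring of K. Then there exists a face s of K with exactly n vertices that is fully-colored under ℒ, i.e., there is a bijection f : Fin n → s with i ∈ ℒ(f(i)) for every i. -/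
/-!
The multi-coloring reduces to Sperner's lemma for an ordinary coloring: every vertex `v` has a
coordinate `j = μ v` with `0 < v j` and `j + 1 ∈ 𝓛 v`, where `j + 1` is taken cyclically in `Fin n`.
For an interior vertex, shift any color by one; for a boundary vertex, choose `j` so that going from
`j` to `j + 1` passes from a positive coordinate to a vanishing one. Then `μ` is a Sperner coloring,
and a face on which `μ` takes all values is fully-colored under `𝓛`.

Sperner's lemma is proved by volume. Let `φ` be the piecewise linear self-map of the simplex `Δ`
which sends each vertex `v` to `e_{μ v}` and agrees with a linear map `A s` on each face `s`. For
small `τ > 0` the map `h x = (1 + τ) x - τ φ x` sends `Δ` to itself, because `v (μ v) > 0` for every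
vertex. It is moreover a bijection of `Δ`: solving `h x = y` means finding a fixed point of the map
`x ↦ (y + τ φ x) / (1 + τ)`, which preserves the convex set `Δ` and is a contraction since `φ` is
Lipschitz (`bijOn_perturbation`, `norm_sub_le_of_pieces`). Hence the images under `h` of the faces
tile `Δ`. Passing to the cones with apex `0` in `ℝⁿ` and comparing volumes
(`sum_det_mul_volume_cap`) gives
`∑ s, |det ((1 + τ) id - τ A s)| vol (cap s) = vol (cap Δ)`, where the determinants are positive for
small `τ`. The left side without absolute values is a polynomial in `τ`, so it is constant, and at
`τ = -1` it reads `∑ s, det (A s) vol (cap s) = vol (cap Δ) > 0`. A face `s` with nonzero summand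
spans `ℝⁿ` and has `A s` invertible, so `μ` takes every value on `s`.
-/

open Geometry

open Set Filter Topology MeasureTheory Polynomial
open scoped ENNReal

namespace MultiSperner

/-! ### Choosing a Sperner coloring -/

open Fin.NatCast Fin.CommRing in
theorem exists_shifted_color {n : ℕ} [NeZero n] (x : Fin n → ℝ) (hx : x ∈ stdSimplex ℝ (Fin n))
    (c : Finset (Fin n)) (hne : c.Nonempty) (hc : ∀ i, x i = 0 → i ∈ c) :
    ∃ j : Fin n, 0 < x j ∧ j + 1 ∈ c := by
  by_contra! H
  have hstep : ∀ j, x j ≠ 0 → x (j + 1) ≠ 0 := fun j hj h0 =>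
    H j (lt_of_le_of_ne (hx.1 j) hj.symm) (hc _ h0)
  obtain ⟨j, hj⟩ : ∃ j, x j ≠ 0 := by
    by_contra! h
    have := hx.2
    simp [h] at this
  have hall : ∀ m : ℕ, x (j + (m : Fin n)) ≠ 0 := by
    intro m
    induction m with
    | zero => simpa using hj
    | succ k ih =>
      have := hstep _ ih
      rwa [add_assoc, ← Nat.cast_succ] at this
  obtain ⟨i, hi⟩ := hne
  have h1 : x (i - 1) ≠ 0 := by
    have := hall (i - 1 - j).val
    rwa [Fin.cast_val_eq_self, add_sub_cancel] at this
  exact H (i - 1) (lt_of_le_of_ne (hx.1 _) h1.symm) (by simpa using hi)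

/-! ### Small perturbations of the identity on a convex set -/

/-- A piecewise linear map on a convex set, with finitely many closed pieces, is Lipschitz. No
continuity of `φ` is assumed: it follows from the closedness of the pieces. -/
theorem norm_sub_le_of_pieces {E ι : Type*} [NormedAddCommGroup E] [NormedSpace ℝ E]
    (F : Finset ι) (D : ι → Set E) (hD : ∀ i ∈ F, IsClosed (D i)) {Δ : Set E}
    (hΔ : Convex ℝ Δ) (hcov : ∀ x ∈ Δ, ∃ i ∈ F, x ∈ D i) (φ : E → E) (A : ι → E →L[ℝ] E)
    (hφ : ∀ i ∈ F, ∀ x ∈ D i, φ x = A i x) (L : ℝ) (hL : ∀ i ∈ F, ‖A i‖ ≤ L)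
    {x y : E} (hx : x ∈ Δ) (hy : y ∈ Δ) : ‖φ y - φ x‖ ≤ L * ‖y - x‖ := by
  set z : ℝ → E := fun u => x + u • (y - x) with hz
  have hzc : Continuous z := by fun_prop
  have hzΔ : ∀ u ∈ Icc (0 : ℝ) 1, z u ∈ Δ := fun u hu => hΔ.add_smul_sub_mem hx hy hu
  set S : Set ℝ := ⋃ i ∈ F, {u | z u ∈ D i ∧ ‖A i (z u) - φ x‖ ≤ L * (u * ‖y - x‖)} with hS
  have hSc : IsClosed S := by
    refine F.finite_toSet.isClosed_biUnion fun i hi => ?_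
    refine ((hD i hi).preimage hzc).inter ?_
    exact isClosed_le (f := fun u => ‖A i (z u) - φ x‖) (g := fun u => L * (u * ‖y - x‖))
      (by fun_prop) (by fun_prop)
  have key : Icc (0 : ℝ) 1 ⊆ S := by
    refine IsClosed.Icc_subset_of_forall_exists_gt (hSc.inter isClosed_Icc) ?_ ?_
    · obtain ⟨i, hi, hxi⟩ := hcov x hx
      refine mem_biUnion hi ⟨by simpa [hz] using hxi, ?_⟩
      simp [hz, hφ i hi x hxi]
    · rintro t ⟨htS, ht⟩ w hw
      -- Some piece is visited at times accumulating at `t` from the right.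
      obtain ⟨i, hi, hfreq⟩ : ∃ i ∈ F, ∃ᶠ u in 𝓝[>] t, z u ∈ D i := by
        by_contra! H
        have H' : ∀ᶠ u in 𝓝[>] t, ∀ i ∈ F, z u ∉ D i :=
          (Filter.eventually_all_finset F).2 H
        have h1 : ∀ᶠ u in 𝓝[>] t, u ∈ Ioc t 1 := Ioc_mem_nhdsGT ht.2
        obtain ⟨u, hu, hu1⟩ := (H'.and h1).exists
        obtain ⟨i, hi, hui⟩ := hcov (z u) (hzΔ u ⟨ht.1.trans hu1.1.le, hu1.2⟩)
        exact hu i hi hui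
      have hti : z t ∈ D i := by
        have h1 : ∃ᶠ u in 𝓝 t, z u ∈ D i := hfreq.filter_mono nhdsWithin_le_nhds
        exact ((hD i hi).preimage hzc).mem_of_frequently_of_tendsto h1 tendsto_id
      have h1 : ∀ᶠ u in 𝓝[>] t, u ∈ Ioc t w := Ioc_mem_nhdsGT hw
      obtain ⟨u, hui, hu⟩ := (hfreq.and_eventually h1).exists
      refine ⟨u, mem_biUnion hi ⟨hui, ?_⟩, hu⟩
      obtain ⟨k, hk, htk, hle⟩ := mem_iUnion₂.1 htS
      rw [← hφ k hk _ htk, hφ i hi _ hti] at hle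
      have h2 : ‖A i (z u) - A i (z t)‖ ≤ L * ((u - t) * ‖y - x‖) := by
        have h3 : z u - z t = (u - t) • (y - x) := by simp only [hz]; module
        rw [← map_sub, h3]
        calc _ ≤ ‖A i‖ * ‖(u - t) • (y - x)‖ := (A i).le_opNorm _
          _ = ‖A i‖ * ((u - t) * ‖y - x‖) := by
            rw [norm_smul, Real.norm_of_nonneg (sub_nonneg.2 hu.1.le)]
          _ ≤ _ := mul_le_mul_of_nonneg_right (hL i hi)
            (mul_nonneg (sub_nonneg.2 hu.1.le) (norm_nonneg _))
      calc _ ≤ ‖A i (z u) - A i (z t)‖ + ‖A i (z t) - φ x‖ := norm_sub_le_norm_sub_add_norm_sub _ _ _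
        _ ≤ L * ((u - t) * ‖y - x‖) + L * (t * ‖y - x‖) := add_le_add h2 hle
        _ = _ := by ring
  obtain ⟨i, hi, h1, h2⟩ := mem_iUnion₂.1 (key (right_mem_Icc.2 zero_le_one))
  rw [← hφ i hi _ h1] at h2
  simpa [hz] using h2

/-- With the sign of `τ` chosen here, `h x = y` is a fixed point equation for
`x ↦ (1 + τ)⁻¹ (y + τ φ x)`, a convex combination of points of `Δ`, so that the contraction
principle applies inside `Δ`. -/
theorem bijOn_perturbation {E : Type*} [NormedAddCommGroup E] [NormedSpace ℝ E] {Δ : Set E}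
    (hΔ : Convex ℝ Δ) (hcomp : IsComplete Δ) {φ h : E → E} (hφ : MapsTo φ Δ Δ) {L τ : ℝ}
    (hLip : ∀ x ∈ Δ, ∀ y ∈ Δ, ‖φ y - φ x‖ ≤ L * ‖y - x‖) (hτ : 0 < τ) (hL : 0 ≤ L)
    (hτL : τ * L < 1)
    (hh : ∀ x ∈ Δ, h x = (1 + τ) • x - τ • φ x) (hmaps : MapsTo h Δ Δ) : BijOn h Δ Δ := by
  have h1τ : (0 : ℝ) < 1 + τ := by linarith
  refine ⟨hmaps, ?_, ?_⟩
  · intro x hx y hy hxy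
    rw [hh x hx, hh y hy] at hxy
    have h1 : (1 + τ) • (y - x) = τ • (φ y - φ x) := by
      rw [smul_sub, smul_sub, sub_eq_sub_iff_add_eq_add, add_comm (τ • φ y)]
      exact (sub_eq_sub_iff_add_eq_add.1 hxy).symm
    have h2 : (1 + τ) * ‖y - x‖ = τ * ‖φ y - φ x‖ := by
      have := congrArg norm h1
      rwa [norm_smul, norm_smul, Real.norm_of_nonneg h1τ.le, Real.norm_of_nonneg hτ.le] at this
    have h3 := mul_le_mul_of_nonneg_left (hLip x hx y hy) hτ.le
    have h4 : ‖y - x‖ ≤ 0 := by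
      by_contra! h5
      nlinarith
    exact (sub_eq_zero.1 (norm_le_zero_iff.1 h4)).symm
  · intro y hy
    set G : E → E := fun x => (1 + τ)⁻¹ • (y + τ • φ x) with hG
    have hGm : MapsTo G Δ Δ := by
      intro x hx
      have := hΔ hy (hφ hx) (a := (1 + τ)⁻¹) (b := (1 + τ)⁻¹ * τ) (by positivity) (by positivity)
        (by field_simp)
      simpa [hG, smul_add, mul_smul] using this
    have hcontr : ContractingWith (Real.toNNReal (τ * L)) (hGm.restrict G Δ Δ) := by
      refine ⟨by rw [← Real.toNNReal_one]; exact (Real.toNNReal_lt_toNNReal_iff one_pos).2 hτL, ?_⟩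
      refine LipschitzWith.of_dist_le_mul ?_
      rintro ⟨a, ha⟩ ⟨b, hb⟩
      rw [Real.coe_toNNReal _ (by positivity)]
      change dist (G a) (G b) ≤ τ * L * dist a b
      rw [dist_eq_norm, dist_eq_norm]
      have h1 : G a - G b = ((1 + τ)⁻¹ * τ) • (φ a - φ b) := by simp only [hG]; module
      rw [h1, norm_smul, Real.norm_of_nonneg (by positivity)]
      have h2 : (1 + τ)⁻¹ * τ ≤ τ := mul_le_of_le_one_left hτ.le (inv_le_one_of_one_le₀ (by linarith))
      calc _ ≤ τ * (L * ‖a - b‖) :=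
            mul_le_mul h2 (hLip b hb a ha) (norm_nonneg _) hτ.le
        _ = _ := by ring
    obtain ⟨x, hx, hfix, -⟩ := ContractingWith.exists_fixedPoint' hcomp hGm hcontr hy
      (edist_ne_top _ _)
    refine ⟨x, hx, ?_⟩
    rw [hh x hx]
    have h1 : (1 + τ) • x = y + τ • φ x := by
      conv_lhs => rw [← hfix.eq]
      simp only [hG]
      rw [smul_inv_smul₀ h1τ.ne']
    rw [h1, add_sub_cancel_right]

/-! ### Volumes of cones -/

/-- The truncated cone over `D` with apex `0`: the union of the segments from `0` to points
of `D`. -/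
def cap {E : Type*} [AddCommGroup E] [Module ℝ E] (D : Set E) : Set E :=
  (fun p : ℝ × E => p.1 • p.2) '' (Icc (0 : ℝ) 1 ×ˢ D)

theorem isCompact_cap {E : Type*} [NormedAddCommGroup E] [NormedSpace ℝ E] {D : Set E}
    (hD : IsCompact D) : IsCompact (cap D) :=
  (isCompact_Icc.prod hD).image (by fun_prop)

theorem image_cap {E : Type*} [AddCommGroup E] [Module ℝ E] (B : E →ₗ[ℝ] E) (D : Set E) :
    B '' cap D = cap (B '' D) := by
  ext x
  constructor
  · rintro ⟨_, ⟨⟨r, y⟩, ⟨hr, hy⟩, rfl⟩, rfl⟩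
    exact ⟨(r, B y), ⟨hr, mem_image_of_mem _ hy⟩, (map_smul B r y).symm⟩
  · rintro ⟨⟨r, _⟩, ⟨hr, y, hy, rfl⟩, rfl⟩
    exact ⟨r • y, ⟨(r, y), ⟨hr, hy⟩, rfl⟩, map_smul B r y⟩

theorem volume_cap_stdSimplex_pos {n : ℕ} (hn : n ≠ 0) :
    0 < volume (cap (stdSimplex ℝ (Fin n))) := by
  have hop : IsOpen {x : Fin n → ℝ | (∀ i, 0 < x i) ∧ ∑ i, x i < 1} := by
    simp only [ofPred_and, ofPred_forall]
    exact (isOpen_iInter_of_finite fun i => isOpen_lt (by fun_prop) (by fun_prop)).inter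
      (isOpen_lt (by fun_prop) (by fun_prop))
  have hn' : (0 : ℝ) < n := by positivity
  refine (hop.measure_pos volume ⟨fun _ => ((n : ℝ) + 1)⁻¹, fun _ => by positivity, ?_⟩).trans_le
    (measure_mono ?_)
  · simp only [Finset.sum_const, Finset.card_univ, Fintype.card_fin, nsmul_eq_mul]
    rw [← div_eq_mul_inv, div_lt_one (by positivity)]
    linarith
  · rintro x ⟨hx, hx1⟩
    have hpos : 0 < ∑ i, x i :=
      Finset.sum_pos (fun i _ => hx i) ⟨⟨0, Nat.pos_of_ne_zero hn⟩, Finset.mem_univ _⟩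
    refine ⟨(∑ i, x i, (∑ i, x i)⁻¹ • x), ⟨⟨hpos.le, hx1.le⟩, fun i => ?_, ?_⟩, ?_⟩
    · simpa using mul_nonneg (inv_nonneg.2 hpos.le) (hx i).le
    · simp only [Pi.smul_apply, smul_eq_mul, ← Finset.mul_sum]
      exact inv_mul_cancel₀ hpos.ne'
    · exact smul_inv_smul₀ hpos.ne' x

/-- If a bijection `h` of the simplex is linear on each face of a triangulation, then the images of
the cones over the faces tile the cone over the simplex, up to null sets. The lower-dimensional
faces in `F` contribute zero. -/
theorem sum_det_mul_volume_cap {n : ℕ} (F : Finset (Finset (Fin n → ℝ)))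
    (hli : ∀ s ∈ F, LinearIndepOn ℝ id (s : Set (Fin n → ℝ)))
    (hinter : ∀ s ∈ F, ∀ t ∈ F, convexHull ℝ (s : Set (Fin n → ℝ)) ∩ convexHull ℝ (t : Set _) ⊆
      convexHull ℝ ((s : Set (Fin n → ℝ)) ∩ t))
    (hcov : ⋃ s ∈ F, convexHull ℝ (s : Set (Fin n → ℝ)) = stdSimplex ℝ (Fin n))
    (h : (Fin n → ℝ) → (Fin n → ℝ))
    (hbij : BijOn h (stdSimplex ℝ (Fin n)) (stdSimplex ℝ (Fin n)))
    (B : Finset (Fin n → ℝ) → (Fin n → ℝ) →ₗ[ℝ] (Fin n → ℝ))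
    (hB : ∀ s ∈ F, ∀ x ∈ convexHull ℝ (s : Set (Fin n → ℝ)), h x = B s x) :
    ∑ s ∈ F, ENNReal.ofReal |LinearMap.det (B s)| * volume (cap (convexHull ℝ (s : Set (Fin n → ℝ)))) =
      volume (cap (stdSimplex ℝ (Fin n))) := by
  have hsub : ∀ s ∈ F, convexHull ℝ (s : Set (Fin n → ℝ)) ⊆ stdSimplex ℝ (Fin n) :=
    fun s hs x hx => hcov ▸ mem_biUnion (Finset.mem_coe.2 hs) hx
  have hcpt : ∀ s : Finset (Fin n → ℝ), IsCompact (convexHull ℝ (s : Set (Fin n → ℝ))) :=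
    fun s => s.finite_toSet.isCompact_convexHull ℝ
  have hU : ⋃ s ∈ F, B s '' cap (convexHull ℝ (s : Set (Fin n → ℝ))) =
      cap (stdSimplex ℝ (Fin n)) := by
    apply Subset.antisymm
    · refine iUnion₂_subset fun s hs => ?_
      rw [image_cap]
      refine image_mono (prod_mono_right ?_)
      rintro _ ⟨x, hx, rfl⟩
      rw [← hB s hs x hx]
      exact hbij.mapsTo (hsub s hs hx)
    · rintro _ ⟨⟨r, y⟩, ⟨hr, hy⟩, rfl⟩
      obtain ⟨x, hx, rfl⟩ := hbij.surjOn hy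
      rw [← hcov] at hx
      obtain ⟨s, hs, hxs⟩ := mem_iUnion₂.1 hx
      refine mem_biUnion hs ?_
      rw [image_cap]
      exact ⟨(r, h x), ⟨hr, x, hxs, (hB s hs x hxs).symm⟩, rfl⟩
  rw [← hU, measure_biUnion_finset₀]
  · exact Finset.sum_congr rfl fun s _ => (Measure.addHaar_image_linearMap volume (B s) _).symm
  · intro s hs t ht hst
    -- Two images meet inside `B s (span (s ∩ t))`, a subspace of dimension less than `n`.
    set V : Submodule ℝ (Fin n → ℝ) :=
      (Submodule.span ℝ ((s ∩ t : Finset (Fin n → ℝ)) : Set (Fin n → ℝ))).map (B s) with hV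
    refine measure_mono_null (t := (V : Set (Fin n → ℝ))) ?_ (Measure.addHaar_submodule _ V ?_)
    · rintro z ⟨hzs, hzt⟩
      simp only [image_cap] at hzs hzt
      obtain ⟨⟨r, _⟩, ⟨hr, x, hx, rfl⟩, rfl⟩ := hzs
      obtain ⟨⟨r', _⟩, ⟨hr', x', hx', rfl⟩, hzz⟩ := hzt
      simp only at hr hx hr' hx' hzz ⊢
      have hxΔ := hsub s hs hx
      have hxΔ' := hsub t ht hx'
      rw [← hB s hs x hx, ← hB t ht x' hx'] at hzz
      rw [← hB s hs x hx]
      have hrr : r' = r := by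
        have := congrArg (fun z : Fin n → ℝ => ∑ i, z i) hzz
        simpa [← Finset.mul_sum, (hbij.mapsTo hxΔ).2, (hbij.mapsTo hxΔ').2] using this
      subst hrr
      rcases eq_or_ne r' 0 with h0 | h0
      · simp [h0]
      · have hxx : x' = x := hbij.injOn hxΔ' hxΔ (smul_right_injective _ h0 hzz)
        subst hxx
        refine V.smul_mem _ ?_
        rw [hB s hs x' hx]
        refine Submodule.mem_map_of_mem ?_
        have := hinter s hs t ht ⟨hx, hx'⟩
        rw [← Finset.coe_inter] at this
        exact convexHull_min Submodule.subset_span (Submodule.convex _) this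
    · intro htop
      have hcard : ∀ u ∈ F, u.card ≤ n := fun u hu => by
        have h1 : LinearIndependent ℝ (fun x : u => (x : Fin n → ℝ)) := hli u hu
        simpa using h1.fintype_card_le_finrank
      have h2 : n ≤ (s ∩ t).card := by
        have h3 : Module.finrank ℝ V = n := by rw [htop]; simp
        calc n = Module.finrank ℝ V := h3.symm
          _ ≤ _ := Submodule.finrank_map_le _ _
          _ ≤ _ := finrank_span_finset_le_card _
      have h4 : s ∩ t = s := Finset.eq_of_subset_of_card_le Finset.inter_subset_left
        ((hcard s hs).trans h2)
      have h5 : s ∩ t = t := Finset.eq_of_subset_of_card_le Finset.inter_subset_right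
        ((hcard t ht).trans h2)
      exact hst (h4.symm.trans h5)
  · intro s _
    exact ((isCompact_cap (hcpt s)).image (LinearMap.continuous_of_finiteDimensional _)
      ).measurableSet.nullMeasurableSet

theorem exists_det_polynomial {n : ℕ} (A : (Fin n → ℝ) →ₗ[ℝ] (Fin n → ℝ)) :
    ∃ p : ℝ[X], ∀ τ : ℝ,
      p.eval τ = LinearMap.det ((1 + τ) • (LinearMap.id : (Fin n → ℝ) →ₗ[ℝ] _) - τ • A) := by
  refine ⟨((1 + X : ℝ[X]) • (1 : Matrix (Fin n) (Fin n) ℝ[X]) -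
    (X : ℝ[X]) • (LinearMap.toMatrix' A).map C).det, fun τ => ?_⟩
  rw [← LinearMap.det_toMatrix', ← coe_evalRingHom, RingHom.map_det]
  congr 1
  ext i j
  simp [Matrix.one_apply, LinearMap.toMatrix'_apply, Pi.single_apply]
  split_ifs <;> simp [mul_comm]

/-! ### Sperner's lemma -/

/-- Affinely independent points of a hyperplane not containing `0` are linearly independent. -/
theorem linearIndepOn_of_affineIndependent {n : ℕ} {s : Finset (Fin n → ℝ)}
    (hs : AffineIndependent ℝ ((↑) : s → Fin n → ℝ)) (hsum : ∀ v ∈ s, ∑ i, v i = 1) :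
    LinearIndepOn ℝ id (s : Set (Fin n → ℝ)) := by
  change LinearIndependent ℝ (fun x : s => (x : Fin n → ℝ))
  rw [linearIndependent_iff']
  intro t g hg
  refine affineIndependent_iff.1 hs t g ?_ hg
  have h1 := congrArg (fun z : Fin n → ℝ => ∑ i, z i) hg
  simp only [Finset.sum_apply, Pi.smul_apply, smul_eq_mul, Pi.zero_apply,
    Finset.sum_const_zero] at h1
  rw [Finset.sum_comm] at h1
  simpa [← Finset.mul_sum, hsum] using h1

theorem exists_linearMap_eqOn {E E' : Type*} [AddCommGroup E] [Module ℝ E] [AddCommGroup E']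
    [Module ℝ E'] {s : Set E} (hs : LinearIndepOn ℝ id s) (g : E → E') :
    ∃ A : E →ₗ[ℝ] E', ∀ v ∈ s, A v = g v := by
  let b := Module.Basis.extend hs
  refine ⟨b.constr ℝ fun i => g i, fun v hv => ?_⟩
  have h1 := b.constr_basis ℝ (fun i => g i) ⟨v, hs.subset_extend _ hv⟩
  rwa [Module.Basis.extend_apply_self] at h1

/-- Sperner's lemma. The hypothesis on `μ` says that each vertex is colored by one of the corners
spanning the smallest face of the simplex which contains it. -/
theorem sperner {n : ℕ} (hn : n ≠ 0) (K : SimplicialComplex ℝ (Fin n → ℝ))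
    (hfin : K.faces.Finite) (hspace : K.space = stdSimplex ℝ (Fin n))
    (μ : (Fin n → ℝ) → Fin n) (hμ : ∀ v ∈ K.vertices, 0 < v (μ v)) :
    ∃ s ∈ K.faces, s.card = n ∧ ∀ j, ∃ v ∈ s, μ v = j := by
  classical
  set Δ : Set (Fin n → ℝ) := stdSimplex ℝ (Fin n) with hΔ
  set F := hfin.toFinset with hF
  have hmemF : ∀ {s}, s ∈ F ↔ s ∈ K.faces := by simp [hF]
  have hcov : ⋃ s ∈ F, convexHull ℝ (s : Set (Fin n → ℝ)) = Δ := by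
    rw [← hspace]; simp [SimplicialComplex.space, hmemF]
  have hsub : ∀ s ∈ F, convexHull ℝ (s : Set (Fin n → ℝ)) ⊆ Δ :=
    fun s hs x hx => hcov ▸ mem_biUnion (Finset.mem_coe.2 hs) hx
  have hvΔ : ∀ s ∈ F, ∀ v ∈ s, v ∈ Δ := fun s hs v hv =>
    hsub s hs (subset_convexHull ℝ _ hv)
  have hvpos : ∀ s ∈ F, ∀ v ∈ s, 0 < v (μ v) := fun s hs v hv =>
    hμ v (K.down_closed (hmemF.1 hs) (Finset.singleton_subset_iff.2 hv)
      (Finset.singleton_nonempty v))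
  have hinter : ∀ s ∈ F, ∀ t ∈ F, convexHull ℝ (s : Set (Fin n → ℝ)) ∩ convexHull ℝ (t : Set _) ⊆
      convexHull ℝ ((s : Set (Fin n → ℝ)) ∩ t) := fun s hs t ht =>
    K.inter_subset_convexHull (hmemF.1 hs) (hmemF.1 ht)
  have hli : ∀ s ∈ F, LinearIndepOn ℝ id (s : Set (Fin n → ℝ)) := fun s hs =>
    linearIndepOn_of_affineIndependent (K.indep (hmemF.1 hs)) fun v hv => (hvΔ s hs v hv).2
  have hA : ∀ s, ∃ A : (Fin n → ℝ) →ₗ[ℝ] (Fin n → ℝ), s ∈ F →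
      ∀ v ∈ s, A v = Pi.single (μ v) 1 := by
    intro s
    by_cases hs : s ∈ F
    · obtain ⟨A, hA⟩ := exists_linearMap_eqOn (hli s hs)
        (fun v => (Pi.single (μ v) 1 : Fin n → ℝ))
      exact ⟨A, fun _ => hA⟩
    · exact ⟨0, fun h => absurd h hs⟩
  choose A hA using hA
  have hσ : ∀ x, ∃ s, x ∈ Δ → s ∈ F ∧ x ∈ convexHull ℝ (s : Set (Fin n → ℝ)) := by
    intro x
    by_cases hx : x ∈ Δ
    · rw [← hcov] at hx
      obtain ⟨s, hs, hxs⟩ := mem_iUnion₂.1 hx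
      exact ⟨s, fun _ => ⟨hs, hxs⟩⟩
    · exact ⟨∅, fun h => absurd h hx⟩
  choose σ hσ using hσ
  -- The piecewise linear self-map of `Δ` sending every vertex `v` to `e_{μ v}`.
  set φ : (Fin n → ℝ) → (Fin n → ℝ) := fun x => A (σ x) x with hφdef
  have hφ : ∀ s ∈ F, ∀ x ∈ convexHull ℝ (s : Set (Fin n → ℝ)), φ x = A s x := by
    intro s hs x hx
    obtain ⟨h1, h2⟩ := hσ x (hsub s hs hx)
    have h3 := hinter _ h1 s hs ⟨h2, hx⟩
    refine convexHull_min (t := (LinearMap.eqLocus (A (σ x)) (A s) : Set (Fin n → ℝ)))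
      ?_ (Submodule.convex _) h3
    rintro v ⟨hv1, hv2⟩
    exact (hA _ h1 v hv1).trans (hA s hs v hv2).symm
  have hφΔ : MapsTo φ Δ Δ := by
    intro x hx
    obtain ⟨h1, h2⟩ := hσ x hx
    have h3 : A (σ x) '' convexHull ℝ (σ x : Set (Fin n → ℝ)) ⊆ Δ := by
      rw [LinearMap.image_convexHull]
      refine convexHull_min ?_ (convex_stdSimplex ℝ _)
      rintro _ ⟨v, hv, rfl⟩
      rw [hA _ h1 v hv]
      exact single_mem_stdSimplex ℝ _
    exact h3 (mem_image_of_mem _ h2)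
  obtain ⟨L, hL0, hL⟩ : ∃ L : ℝ, 0 ≤ L ∧ ∀ s ∈ F, ‖LinearMap.toContinuousLinearMap (A s)‖ ≤ L := by
    obtain ⟨M, hM⟩ := (F.image fun s => ‖LinearMap.toContinuousLinearMap (A s)‖).exists_le
    exact ⟨max M 0, le_max_right _ _, fun s hs =>
      (hM _ (Finset.mem_image_of_mem _ hs)).trans (le_max_left _ _)⟩
  have hLip : ∀ x ∈ Δ, ∀ y ∈ Δ, ‖φ y - φ x‖ ≤ L * ‖y - x‖ := by
    intro x hx y hy
    refine norm_sub_le_of_pieces F (fun s => convexHull ℝ (s : Set (Fin n → ℝ)))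
      (fun s _ => (s.finite_toSet.isCompact_convexHull ℝ).isClosed) (convex_stdSimplex ℝ _)
      (fun x hx => ⟨σ x, hσ x hx⟩) φ (fun s => LinearMap.toContinuousLinearMap (A s)) ?_ L hL hx hy
    intro s hs x hx
    exact hφ s hs x hx
  choose p hp using fun s => exists_det_polynomial (A s)
  set vol : Finset (Fin n → ℝ) → ℝ≥0∞ :=
    fun s => volume (cap (convexHull ℝ (s : Set (Fin n → ℝ)))) with hvol
  have hvolfin : ∀ s, vol s ≠ ⊤ := fun s =>
    (isCompact_cap (s.finite_toSet.isCompact_convexHull ℝ)).measure_lt_top.ne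
  have hgood : ∀ᶠ τ : ℝ in 𝓝[>] 0, 0 < τ ∧ τ * L < 1 ∧
      (∀ s ∈ F, ∀ v ∈ s, τ < v (μ v)) ∧ ∀ s ∈ F, 0 < (p s).eval τ := by
    refine eventually_mem_nhdsWithin.and ?_
    refine Filter.Eventually.filter_mono nhdsWithin_le_nhds ?_
    refine Filter.Eventually.and ?_ (Filter.Eventually.and ?_ ?_)
    · exact (continuous_id.mul continuous_const).continuousAt.eventually_lt_const (by simp)
    · exact (Filter.eventually_all_finset F).2 fun s hs => (Filter.eventually_all_finset s).2
        fun v hv => eventually_lt_nhds (hvpos s hs v hv)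
    · refine (Filter.eventually_all_finset F).2 fun s hs => ?_
      refine (p s).continuous.continuousAt.eventually_const_lt ?_
      simp [hp]
  have hpoly : ∀ τ : ℝ, (0 < τ ∧ τ * L < 1 ∧
      (∀ s ∈ F, ∀ v ∈ s, τ < v (μ v)) ∧ ∀ s ∈ F, 0 < (p s).eval τ) →
      (∑ s ∈ F, p s * C (vol s).toReal).eval τ = (volume (cap Δ)).toReal := by
    rintro τ ⟨hτ, hτL, hτv, hτp⟩
    set B : Finset (Fin n → ℝ) → (Fin n → ℝ) →ₗ[ℝ] (Fin n → ℝ) :=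
      fun s => (1 + τ) • LinearMap.id - τ • A s with hB
    set h : (Fin n → ℝ) → (Fin n → ℝ) := fun x => (1 + τ) • x - τ • φ x with hh
    have hhB : ∀ s ∈ F, ∀ x ∈ convexHull ℝ (s : Set (Fin n → ℝ)), h x = B s x := by
      intro s hs x hx
      simp [hh, hB, hφ s hs x hx]
    have hmaps : MapsTo h Δ Δ := by
      intro x hx
      obtain ⟨h1, h2⟩ := hσ x hx
      have h3 : B (σ x) '' convexHull ℝ (σ x : Set (Fin n → ℝ)) ⊆ Δ := by
        rw [LinearMap.image_convexHull]
        refine convexHull_min ?_ (convex_stdSimplex ℝ _)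
        rintro _ ⟨v, hv, rfl⟩
        have hv' := hvΔ _ h1 v hv
        have h4 : B (σ x) v = (1 + τ) • v - τ • Pi.single (μ v) 1 := by
          simp only [hB, LinearMap.sub_apply, LinearMap.smul_apply, LinearMap.id_apply,
            hA _ h1 v hv]
        rw [h4]
        refine ⟨fun i => ?_, ?_⟩
        · have h5 := hv'.1 i
          have h6 := hτv _ h1 v hv
          simp only [Pi.sub_apply, Pi.smul_apply, smul_eq_mul, Pi.single_apply]
          split_ifs with h7
          · subst h7; nlinarith
          · nlinarith
        · simp [Finset.sum_sub_distrib, ← Finset.mul_sum, hv'.2]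
      rw [hhB _ h1 x h2]
      exact h3 (mem_image_of_mem _ h2)
    have hbij : BijOn h Δ Δ := bijOn_perturbation (convex_stdSimplex ℝ _)
      (isCompact_stdSimplex ℝ _).isComplete hφΔ hLip hτ hL0 hτL (fun _ _ => rfl) hmaps
    have hsum := sum_det_mul_volume_cap F hli hinter hcov h hbij B hhB
    rw [← hsum, ENNReal.toReal_sum fun s _ => ENNReal.mul_ne_top ENNReal.ofReal_ne_top (hvolfin s),
      eval_finsetSum]
    refine Finset.sum_congr rfl fun s hs => ?_
    rw [eval_mul, eval_C, ENNReal.toReal_mul, ENNReal.toReal_ofReal (abs_nonneg _), ← hp,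
      abs_of_pos (hτp s hs)]
  have hconst : ∑ s ∈ F, p s * C (vol s).toReal = C (volume (cap Δ)).toReal := by
    refine eq_of_infinite_eval_eq _ _ ?_
    obtain ⟨ε, hε, hsubε⟩ := mem_nhdsGT_iff_exists_Ioo_subset.1 hgood
    refine (Ioo_infinite hε).mono fun τ hτ => ?_
    simpa using hpoly τ (hsubε hτ)
  -- Evaluating at `τ = -1`, where `(1 + τ) id - τ A` is `A` itself.
  have hm1 := congrArg (eval (-1)) hconst
  rw [eval_finsetSum, eval_C] at hm1
  have hpos : 0 < (volume (cap Δ)).toReal :=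
    ENNReal.toReal_pos (volume_cap_stdSimplex_pos hn).ne'
      (isCompact_cap (isCompact_stdSimplex ℝ _)).measure_lt_top.ne
  obtain ⟨s, hs, hne⟩ := Finset.exists_ne_zero_of_sum_ne_zero (hm1.trans_ne hpos.ne')
  rw [eval_mul, eval_C, hp] at hne
  have hdet : LinearMap.det (A s) ≠ 0 := by
    have h1 : (1 + (-1 : ℝ)) • (LinearMap.id : (Fin n → ℝ) →ₗ[ℝ] _) - (-1 : ℝ) • A s = A s := by
      module
    rw [h1] at hne
    exact left_ne_zero_of_mul hne
  have hspan : Submodule.span ℝ (s : Set (Fin n → ℝ)) = ⊤ := by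
    by_contra hspan
    refine right_ne_zero_of_mul hne ?_
    have : vol s = 0 := by
      refine measure_mono_null ?_ (Measure.addHaar_submodule volume _ hspan)
      rintro _ ⟨⟨r, x⟩, ⟨-, hx⟩, rfl⟩
      exact Submodule.smul_mem _ _ (convexHull_min Submodule.subset_span (Submodule.convex _) hx)
    simp [this]
  have hcard : s.card = n := by
    refine le_antisymm ?_ ?_
    · have h1 : LinearIndependent ℝ (fun x : s => (x : Fin n → ℝ)) := hli s hs
      simpa using h1.fintype_card_le_finrank
    · have h1 := finrank_span_finset_le_card (R := ℝ) s
      rw [Set.finrank, hspan] at h1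
      simpa using h1
  refine ⟨s, hmemF.1 hs, hcard, fun j => ?_⟩
  by_contra! hj
  -- The image of `A s` lies in the coordinate hyperplane `x j = 0`.
  have h1 : (LinearMap.proj j : (Fin n → ℝ) →ₗ[ℝ] ℝ) ∘ₗ A s = 0 := by
    refine LinearMap.ext_on hspan fun v hv => ?_
    simp [hA s hs v hv, (hj v hv).symm]
  have h2 : IsUnit (A s) := (LinearMap.isUnit_iff_isUnit_det _).2 hdet.isUnit
  obtain ⟨x, hx⟩ := ((Module.End.isUnit_iff _).1 h2).2 (Pi.single j 1)
  have h3 := LinearMap.congr_fun h1 x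
  simp [hx] at h3

end MultiSperner

theorem multicoloring_sperner (n : ℕ) (hn : 2 ≤ n)
    (K : SimplicialComplex ℝ (Fin n → ℝ))
    (hfin : K.faces.Finite)
    (hspace : K.space = stdSimplex ℝ (Fin n))
    (𝓛 : (Fin n → ℝ) → Finset (Fin n))
    (h𝓛ne : ∀ x ∈ K.vertices, (𝓛 x).Nonempty)
    (h𝓛special : ∀ x ∈ K.vertices, ∀ i : Fin n, x i = 0 → i ∈ 𝓛 x) :
    ∃ s ∈ K.faces, s.card = n ∧
      ∃ f : Fin n → (Fin n → ℝ), Function.Injective f ∧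
        (∀ i, f i ∈ s) ∧ ∀ i, i ∈ 𝓛 (f i) := by
  have hn0 : n ≠ 0 := by omega
  have : NeZero n := ⟨hn0⟩
  have hμ : ∀ v, ∃ j : Fin n, v ∈ K.vertices → 0 < v j ∧ j + 1 ∈ 𝓛 v := by
    intro v
    by_cases hv : v ∈ K.vertices
    · obtain ⟨j, hj⟩ := MultiSperner.exists_shifted_color v
        (hspace ▸ K.vertices_subset_space hv) (𝓛 v) (h𝓛ne v hv) (h𝓛special v hv)
      exact ⟨j, fun _ => hj⟩
    · exact ⟨0, fun h => absurd h hv⟩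
  choose μ hμ using hμ
  obtain ⟨s, hs, hcard, hsurj⟩ := MultiSperner.sperner hn0 K hfin hspace μ fun v hv => (hμ v hv).1
  choose g hgs hg using hsurj
  refine ⟨s, hs, hcard, fun i => g (i - 1), fun i j hij => ?_, fun i => hgs _, fun i => ?_⟩
  · have := congrArg μ hij
    simpa [hg] using this
  · have hv : g (i - 1) ∈ K.vertices := K.down_closed hs
      (Finset.singleton_subset_iff.2 (hgs _)) (Finset.singleton_nonempty _)
    have := (hμ _ hv).2
    rwa [hg, sub_add_cancel] at this
end

section
/- For every fair-division instance with objective valuations (with good/chore partition M = G ∪ C), an EQX_g^c allocation always exists. -/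
/-- An item `x` is a good: removing it from any bundle containing it never
increases any agent's value. -/
def IsGood (m : ℕ) {n : ℕ} (v : Fin n → Finset ℕ → ℤ) (x : ℕ) : Prop :=
  ∀ i : Fin n, ∀ S ⊆ Finset.Icc 1 m, x ∈ S → v i (S.erase x) ≤ v i S

/-- `EQX_g^c` for objective valuations with good/chore partition `M = G ∪ C`:
for every agent `i`, either (i) every inequity of `i` towards `j` vanishes upon
removing any good from `A j`, or (ii) it vanishes upon removing any chore from
`A i`. -/
def EQXgc {n : ℕ} (v : Fin n → Finset ℕ → ℤ) (G C : Finset ℕ)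
    (A : Fin n → Finset ℕ) : Prop :=
  ∀ i : Fin n,
    (∀ j : Fin n, v i (A i) < v j (A j) →
      (A j ∩ G).Nonempty ∧ ∀ g ∈ A j ∩ G, v j ((A j).erase g) ≤ v i (A i)) ∨
    (∀ j : Fin n, v i (A i) < v j (A j) →
      (A i ∩ C).Nonempty ∧ ∀ c ∈ A i ∩ C, v j (A j) ≤ v i ((A i).erase c))

lemma value_nonpos_of_subset_chores {n m : ℕ} {v : Fin n → Finset ℕ → ℤ} (hv0 : ∀ i, v i ∅ = 0)
    {C : Finset ℕ} (hCM : C ⊆ Finset.Icc 1 m) (hC : ∀ x ∈ C, IsChore m v x)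
    (i : Fin n) (S : Finset ℕ) (hS : S ⊆ C) : v i S ≤ 0 := by
  induction S using Finset.induction_on with
  | empty => rw [hv0]
  | insert a S ha ih =>
    have h := hC a (hS (Finset.mem_insert_self _ _)) i _ (hS.trans hCM)
      (Finset.mem_insert_self _ _)
    rw [Finset.erase_insert ha] at h
    exact h.trans (ih ((Finset.subset_insert _ _).trans hS))

/-- The allocation obtained from `A` by moving the item `g` from agent `j` to agent `l`. -/
def moveItem {n : ℕ} (A : Fin n → Finset ℕ) (j l : Fin n) (g : ℕ) : Fin n → Finset ℕ :=
  fun k => if k = l then insert g (A l) else if k = j then (A j).erase g else A k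

lemma isAllocation_moveItem {n m : ℕ} {A : Fin n → Finset ℕ} (hA : IsAllocation m A)
    {j l : Fin n} (hjl : j ≠ l) {g : ℕ} (hg : g ∈ A j) : IsAllocation m (moveItem A j l g) := by
  obtain ⟨hd, hu⟩ := hA
  have hx : ∀ k, g ∈ A k → k = j := by
    intro k hk
    by_contra hne
    exact Finset.disjoint_left.1 (hd k j hne) hk hg
  refine ⟨?_, ?_⟩
  · intro a b hab
    rw [Finset.disjoint_left]
    intro x hxa hxb
    have key : ∀ k, x ∈ moveItem A j l g k → (x = g → k = l) ∧ (x ≠ g → x ∈ A k) := by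
      intro k hk
      unfold moveItem at hk
      split_ifs at hk with h1 h2
      · subst h1
        simp only [Finset.mem_insert] at hk
        tauto
      · subst h2
        simp only [Finset.mem_erase] at hk
        tauto
      · exact ⟨fun h => absurd (hx k (h ▸ hk)) h2, fun _ => hk⟩
    have ka := key a hxa
    have kb := key b hxb
    by_cases hxg : x = g
    · exact hab ((ka.1 hxg).trans (kb.1 hxg).symm)
    · exact Finset.disjoint_left.1 (hd a b hab) (ka.2 hxg) (kb.2 hxg)
  · rw [← hu]
    ext x
    simp only [Finset.mem_biUnion, Finset.mem_univ, true_and]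
    constructor
    · rintro ⟨k, hk⟩
      unfold moveItem at hk
      split_ifs at hk with h1 h2
      · rcases Finset.mem_insert.1 hk with h | h
        · exact ⟨j, h ▸ hg⟩
        · exact ⟨l, h⟩
      · exact ⟨j, Finset.mem_of_mem_erase hk⟩
      · exact ⟨k, hk⟩
    · rintro ⟨k, hk⟩
      by_cases hxg : x = g
      · exact ⟨l, by simp [moveItem, hxg]⟩
      · refine ⟨k, ?_⟩
        unfold moveItem
        split_ifs with h1 h2
        · exact Finset.mem_insert_of_mem (h1 ▸ hk)
        · exact Finset.mem_erase.2 ⟨hxg, h2 ▸ hk⟩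
        · exact hk

/-- Local optimality: from an allocation with nonnegative values one obtains an allocation in which
removing any good from any agent richer than a poorest agent `l` brings it down to at most the value
of `l`. -/
lemma exists_min_agent {n m : ℕ} (hn : 0 < n)
    (v : Fin n → Finset ℕ → ℤ) (hv0 : ∀ i, v i ∅ = 0)
    (G C : Finset ℕ) (hGC : G ∪ C = Finset.Icc 1 m)
    (hG : ∀ x ∈ G, IsGood m v x) (hC : ∀ x ∈ C, IsChore m v x)
    (A₀ : Fin n → Finset ℕ) (hA₀ : IsAllocation m A₀) (hpos : ∀ i, 0 ≤ v i (A₀ i)) :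
    ∃ A : Fin n → Finset ℕ, IsAllocation m A ∧ ∃ l : Fin n, (∀ i, v l (A l) ≤ v i (A i)) ∧
      ∀ j, v l (A l) < v j (A j) →
        (A j ∩ G).Nonempty ∧ ∀ g ∈ A j ∩ G, v j ((A j).erase g) ≤ v l (A l) := by
  classical
  have : Nonempty (Fin n) := ⟨⟨0, hn⟩⟩
  have hne : (Finset.univ : Finset (Fin n)).Nonempty := Finset.univ_nonempty
  have hsub : ∀ A : Fin n → Finset ℕ, IsAllocation m A → ∀ i, A i ⊆ Finset.Icc 1 m := by
    intro A hA i
    rw [← hA.2]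
    exact Finset.subset_biUnion_of_mem A (Finset.mem_univ i)
  -- `t A` is the minimum value in `A`, and `P A` is the set of agents attaining it.
  let t : (Fin n → Finset ℕ) → ℤ := fun A => Finset.univ.inf' hne fun i => v i (A i)
  let P : (Fin n → Finset ℕ) → Finset (Fin n) :=
    fun A => Finset.univ.filter fun i => v i (A i) = t A
  have hfin : {A : Fin n → Finset ℕ | IsAllocation m A ∧ ∀ i, 0 ≤ v i (A i)}.Finite := by
    refine (Fintype.piFinset fun _ : Fin n => (Finset.Icc 1 m).powerset).finite_toSet.subset ?_
    intro A hA
    simp only [Finset.mem_coe, Fintype.mem_piFinset, Finset.mem_powerset]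
    exact hsub A hA.1
  obtain ⟨A, ⟨hA, hA0⟩, hmax⟩ := Set.exists_max_image _
    (fun A => toLex (t A, toLex (-((P A).card : ℤ), ∑ i ∈ P A, (A i).card))) hfin
    ⟨A₀, hA₀, hpos⟩
  obtain ⟨l, -, hl⟩ := Finset.exists_mem_eq_inf' hne fun i => v i (A i)
  have hlmin : ∀ i, v l (A l) ≤ v i (A i) := fun i => by
    rw [← hl]; exact Finset.inf'_le _ (Finset.mem_univ i)
  refine ⟨A, hA, l, hlmin, fun j hj => ⟨?_, ?_⟩⟩
  · by_contra hemp
    have hsC : A j ⊆ C := by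
      intro x hx
      have h1 := hsub A hA j hx
      rw [← hGC, Finset.mem_union] at h1
      rcases h1 with h1 | h1
      · exact absurd ⟨x, Finset.mem_inter.2 ⟨hx, h1⟩⟩ hemp
      · exact h1
    have h0 := value_nonpos_of_subset_chores hv0
      (by rw [← hGC]; exact Finset.subset_union_right) hC j _ hsC
    have := hA0 l
    omega
  · intro g hg
    by_contra! hlt
    obtain ⟨hgj, hgG⟩ := Finset.mem_inter.1 hg
    have hjl : j ≠ l := by rintro rfl; exact lt_irrefl _ hj
    have hgl : g ∉ A l := fun h => Finset.disjoint_left.1 (hA.1 j l hjl) hgj h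
    have hB := isAllocation_moveItem hA hjl hgj
    set B := moveItem A j l g with hBdef
    have hBl : B l = insert g (A l) := by simp [hBdef, moveItem]
    have hBj : B j = (A j).erase g := by simp [hBdef, moveItem, hjl]
    have hBk : ∀ k, k ≠ l → k ≠ j → B k = A k := by
      intro k h1 h2; simp [hBdef, moveItem, h1, h2]
    have hvl : v l (A l) ≤ v l (B l) := by
      have h := hG g hgG l (B l) (hsub B hB l) (by rw [hBl]; exact Finset.mem_insert_self _ _)
      rwa [hBl, Finset.erase_insert hgl, ← hBl] at h
    have hvj : v l (A l) < v j (B j) := by rw [hBj]; exact hlt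
    have hBge : ∀ k, v l (A l) ≤ v k (B k) := by
      intro k
      by_cases h1 : k = l
      · subst h1; exact hvl
      by_cases h2 : k = j
      · subst h2; exact hvj.le
      rw [hBk k h1 h2]; exact hlmin k
    have htA : t A = v l (A l) := hl
    have htB : v l (A l) ≤ t B := Finset.le_inf' _ _ fun k _ => hBge k
    have hle := hmax B ⟨hB, fun k => (hA0 l).trans (hBge k)⟩
    simp only [Prod.Lex.toLex_le_toLex] at hle
    have htAB : t B = t A := by
      rcases hle with h | h
      · omega
      · exact h.1
    have hlA : l ∈ P A := by simp [P, htA]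
    -- Only `l` can leave the set of poorest agents, and nobody can join it.
    have hPsub : ∀ k, k ≠ l → (k ∈ P B ↔ k ∈ P A) := by
      intro k hk
      simp only [P, Finset.mem_filter, Finset.mem_univ, true_and, htAB, htA]
      by_cases h2 : k = j
      · subst h2; constructor <;> intro <;> omega
      · rw [hBk k hk h2]
    have hPle : P B ⊆ P A := by
      intro k hk
      by_cases h : k = l
      · rw [h]; exact hlA
      · exact (hPsub k h).1 hk
    have hle2 := (hle.resolve_left (by omega)).2
    have hcard := Finset.card_le_card hPle
    have hPeq : P B = P A := Finset.eq_of_subset_of_card_le hPle (by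
      rcases hle2 with h | h <;> omega)
    have hsum : ∑ i ∈ P B, (B i).card ≤ ∑ i ∈ P A, (A i).card := by
      rcases hle2 with h | h
      · rw [hPeq] at h; omega
      · exact h.2
    rw [hPeq] at hsum
    refine absurd hsum (not_le.2 (Finset.sum_lt_sum ?_ ⟨l, hlA, ?_⟩))
    · intro k hk
      by_cases h1 : k = l
      · subst h1; rw [hBl]; exact Finset.card_le_card (Finset.subset_insert _ _)
      by_cases h2 : k = j
      · subst h2
        simp only [P, Finset.mem_filter, Finset.mem_univ, true_and] at hk
        omega
      rw [hBk k h1 h2]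
    · rw [hBl, Finset.card_insert_of_notMem hgl]; omega

/-- For every instance with objective valuations (good/chore partition
`M = G ∪ C`), an `EQX_g^c` allocation exists. -/
theorem eqxgc_exists_objective (n m : ℕ) (hn : 0 < n)
    (v : Fin n → Finset ℕ → ℤ) (hv0 : ∀ i, v i ∅ = 0)
    (G C : Finset ℕ) (hGC : G ∪ C = Finset.Icc 1 m) (hdisj : Disjoint G C)
    (hG : ∀ x ∈ G, IsGood m v x) (hC : ∀ x ∈ C, IsChore m v x) :
    ∃ A : Fin n → Finset ℕ, IsAllocation m A ∧ EQXgc v G C A := by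
  let a : Fin n := ⟨0, hn⟩
  let A₀ : Fin n → Finset ℕ := fun i => if i = a then Finset.Icc 1 m else ∅
  have hA₀ : IsAllocation m A₀ := by
    refine ⟨fun i j hij => ?_, ?_⟩
    · by_cases hi : i = a
      · have hj : j ≠ a := fun h => hij (hi.trans h.symm)
        simp [A₀, hj]
      · simp [A₀, hi]
    · ext x
      simp only [Finset.mem_biUnion, Finset.mem_univ, true_and, A₀]
      constructor
      · rintro ⟨i, hi⟩
        split_ifs at hi
        · exact hi
        · simp at hi
      · intro hx
        exact ⟨a, by simpa using hx⟩
  have hval : ∀ i, v i (A₀ i) = if i = a then v a (Finset.Icc 1 m) else 0 := by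
    intro i
    by_cases hi : i = a
    · subst hi; simp [A₀]
    · simp [A₀, hi, hv0]
  rcases le_total 0 (v a (Finset.Icc 1 m)) with h | h
  · obtain ⟨A, hA, l, hl, hj⟩ := exists_min_agent hn v hv0 G C hGC hG hC A₀ hA₀
      (fun i => by rw [hval]; split_ifs <;> omega)
    refine ⟨A, hA, fun i => Or.inl fun j hij => ?_⟩
    obtain ⟨h1, h2⟩ := hj j ((hl i).trans_lt hij)
    exact ⟨h1, fun g hg => (h2 g hg).trans (hl i)⟩
  · obtain ⟨A, hA, r, hr, hj⟩ := exists_min_agent hn (fun i S => -v i S)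
      (fun i => by simp [hv0]) C G (by rw [Finset.union_comm]; exact hGC)
      (fun x hx i S hS hxS => neg_le_neg (hC x hx i S hS hxS))
      (fun x hx i S hS hxS => neg_le_neg (hG x hx i S hS hxS)) A₀ hA₀
      (fun i => by rw [hval]; split_ifs <;> omega)
    simp only [neg_le_neg_iff, neg_lt_neg_iff] at hr hj
    refine ⟨A, hA, fun i => Or.inr fun j hij => ?_⟩
    obtain ⟨h1, h2⟩ := hj i (hij.trans_le (hr j))
    exact ⟨h1, fun c hc => (hr j).trans (h2 c hc)⟩
end

section
/- For every fair-division instance with monotone non-increasing valuations there exists an allocation A = (A_1,…,A_n) that is EQX, i.e., for all agents i, j with v_i(A_i) < v_j(A_j), the bundle A_i is nonempty and v_i(A_i ∖ {c}) ≥ v_j(A_j) holds for every item c ∈ A_i. -/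
/-- Pairwise disjoint bundles of items from `{1, …, m}`, such that deleting any item from any
bundle brings its owner to at least the value of every agent. Unallocated items are permitted. -/
structure IsPartialEQX (m : ℕ) {n : ℕ} (v : Fin n → Finset ℕ → ℤ) (A : Fin n → Finset ℕ) :
    Prop where
  subset : ∀ i, A i ⊆ Finset.Icc 1 m
  disjoint : ∀ i j, i ≠ j → Disjoint (A i) (A j)
  le_erase : ∀ i j, ∀ c ∈ A i, v j (A j) ≤ v i ((A i).erase c)

theorem value_antitone {n m : ℕ} {v : Fin n → Finset ℕ → ℤ}
    (hchores : ∀ x ∈ Finset.Icc 1 m, IsChore m v x) (i : Fin n) (S T : Finset ℕ)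
    (hST : S ⊆ T) (hT : T ⊆ Finset.Icc 1 m) : v i T ≤ v i S := by
  induction T using Finset.strongInduction with
  | H T ih =>
    rcases hST.eq_or_ssubset with rfl | h
    · exact le_rfl
    · obtain ⟨x, hxT, hxS⟩ := Finset.exists_of_ssubset h
      have h1 := hchores x (hT hxT) i T hT hxT
      have h2 := ih (T.erase x) (Finset.erase_ssubset hxT)
        (fun y hy => Finset.mem_erase.2 ⟨fun e => hxS (e ▸ hy), hST hy⟩)
        ((Finset.erase_subset _ _).trans hT)
      exact h1.trans h2

/-- An agent `i` of maximal value may exchange its bundle for any `S` made of its own items and one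
unallocated item, provided `S` is no better for `i`, and deleting any item of `S` brings `i` back to
at least its former value. -/
theorem IsPartialEQX.update {n m : ℕ} {v : Fin n → Finset ℕ → ℤ} {A : Fin n → Finset ℕ}
    (hA : IsPartialEQX m v A) {i : Fin n} (hi : ∀ j, v j (A j) ≤ v i (A i))
    {x : ℕ} (hx : x ∈ Finset.Icc 1 m) (hxA : ∀ j, x ∉ A j) {S : Finset ℕ}
    (hS : S ⊆ insert x (A i)) (hle : v i S ≤ v i (A i))
    (hmin : ∀ c ∈ S, v i (A i) ≤ v i (S.erase c)) :
    IsPartialEQX m v (Function.update A i S) := by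
  have hdis : ∀ j, j ≠ i → Disjoint S (A j) := fun j hj =>
    Finset.disjoint_of_subset_left hS
      (Finset.disjoint_insert_left.2 ⟨hxA j, hA.disjoint i j hj.symm⟩)
  have hval : ∀ j, v j (Function.update A i S j) ≤ v j (A j) := by
    intro j
    rcases eq_or_ne j i with rfl | hj
    · simpa using hle
    · simp [hj]
  refine ⟨fun j => ?_, fun j k hjk => ?_, fun j k c hc => ?_⟩
  · rcases eq_or_ne j i with rfl | hj
    · simpa using hS.trans (Finset.insert_subset hx (hA.subset j))
    · simpa [hj] using hA.subset j
  · rcases eq_or_ne j i with rfl | hj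
    · simpa [hjk.symm] using hdis k hjk.symm
    · rcases eq_or_ne k i with rfl | hk
      · simpa [hj] using (hdis j hj).symm
      · simpa [hj, hk] using hA.disjoint j k hjk
  · refine (hval k).trans ?_
    rcases eq_or_ne j i with rfl | hj
    · simp only [Function.update_self] at hc ⊢
      exact (hi k).trans (hmin c hc)
    · simp only [Function.update_of_ne hj] at hc ⊢
      exact hA.le_erase j k c hc

/-- A partial allocation leaving some item unallocated is not extremal: the total value can be
lowered, or else kept while the number of allocated items grows. -/
theorem IsPartialEQX.exists_better {n m : ℕ} (hn : 0 < n) {v : Fin n → Finset ℕ → ℤ}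
    (hchores : ∀ x ∈ Finset.Icc 1 m, IsChore m v x) {A : Fin n → Finset ℕ}
    (hA : IsPartialEQX m v A) {x : ℕ} (hx : x ∈ Finset.Icc 1 m) (hxA : ∀ j, x ∉ A j) :
    ∃ B, IsPartialEQX m v B ∧ (∑ i, v i (B i) < ∑ i, v i (A i) ∨
      ∑ i, v i (B i) = ∑ i, v i (A i) ∧ ∑ i, (A i).card < ∑ i, (B i).card) := by
  have : Nonempty (Fin n) := ⟨⟨0, hn⟩⟩
  obtain ⟨i, hi⟩ := Finite.exists_max (fun j => v j (A j))
  have hins : insert x (A i) ⊆ Finset.Icc 1 m := Finset.insert_subset hx (hA.subset i)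
  have hmono := value_antitone hchores i (A i) _ (Finset.subset_insert x (A i)) hins
  rcases hmono.eq_or_lt with heq | hlt
  · refine ⟨Function.update A i (insert x (A i)),
      hA.update hi hx hxA subset_rfl heq.le fun c _ => ?_, Or.inr ⟨?_, ?_⟩⟩
    · exact heq.ge.trans (value_antitone hchores i _ _ (Finset.erase_subset _ _) hins)
    · refine Finset.sum_congr rfl fun j _ => ?_
      rcases eq_or_ne j i with rfl | hj
      · simpa using heq
      · simp [hj]
    · refine Finset.sum_lt_sum (fun j _ => ?_) ⟨i, Finset.mem_univ i, ?_⟩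
      · rcases eq_or_ne j i with rfl | hj
        · simpa using Finset.card_le_card (Finset.subset_insert x (A j))
        · simp [hj]
      · simp [Finset.card_insert_of_notMem (hxA i)]
  · obtain ⟨S, hSmem, hSmin⟩ := Finset.exists_min_image
      ((insert x (A i)).powerset.filter fun S => v i S < v i (A i)) Finset.card
      ⟨insert x (A i), by simpa using hlt⟩
    rw [Finset.mem_filter, Finset.mem_powerset] at hSmem
    refine ⟨Function.update A i S,
      hA.update hi hx hxA hSmem.1 hSmem.2.le fun c hc => ?_, Or.inl ?_⟩
    · by_contra! hlt'
      have h := hSmin (S.erase c) (by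
        rw [Finset.mem_filter, Finset.mem_powerset]
        exact ⟨(Finset.erase_subset _ _).trans hSmem.1, hlt'⟩)
      exact absurd (Finset.card_erase_lt_of_mem hc) (not_lt.2 h)
    · refine Finset.sum_lt_sum (fun j _ => ?_) ⟨i, Finset.mem_univ i, by simpa using hSmem.2⟩
      rcases eq_or_ne j i with rfl | hj
      · simpa using hSmem.2.le
      · simp [hj]

/-- For every instance with monotone non-increasing valuations (every item is a
chore) there exists an EQX allocation: whenever `v_i(A_i) < v_j(A_j)`, the
bundle `A_i` is nonempty and removing any item of `A_i` removes the inequity. -/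
theorem eqx_exists_nonincreasing (n m : ℕ) (hn : 0 < n)
    (v : Fin n → Finset ℕ → ℤ) (hv0 : ∀ i, v i ∅ = 0)
    (hchores : ∀ x ∈ Finset.Icc 1 m, IsChore m v x) :
    ∃ A : Fin n → Finset ℕ, IsAllocation m A ∧
      ∀ i j : Fin n, v i (A i) < v j (A j) →
        (A i).Nonempty ∧ ∀ c ∈ A i, v j (A j) ≤ v i ((A i).erase c) := by
  have hfin : {A | IsPartialEQX m v A}.Finite := by
    refine (Fintype.piFinset fun _ : Fin n => (Finset.Icc 1 m).powerset).finite_toSet.subset ?_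
    intro A hA
    exact Finset.mem_coe.2 (Fintype.mem_piFinset.2 fun i => Finset.mem_powerset.2 (hA.subset i))
  have hne : {A | IsPartialEQX m v A}.Nonempty := ⟨fun _ => ∅, by constructor <;> simp⟩
  obtain ⟨A, hA, hmax⟩ := Set.exists_max_image _
    (fun A : Fin n → Finset ℕ => toLex (-∑ i, v i (A i), ∑ i, (A i).card)) hfin hne
  refine ⟨A, ⟨hA.disjoint, ?_⟩, fun i j hij => ⟨?_, hA.le_erase i j⟩⟩
  · refine Finset.Subset.antisymm (Finset.biUnion_subset.2 fun i _ => hA.subset i) fun x hx => ?_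
    by_contra hxA
    obtain ⟨B, hB, hlt⟩ := hA.exists_better hn hchores hx (by simpa using hxA)
    refine absurd (hmax B hB) (not_le.2 ?_)
    rw [Prod.Lex.toLex_lt_toLex]
    rcases hlt with h | ⟨h, h'⟩
    · exact Or.inl (neg_lt_neg h)
    · exact Or.inr ⟨by simp [h], h'⟩
  · -- An empty bundle has value `0`, which no value exceeds.
    rw [Finset.nonempty_iff_ne_empty]
    intro h
    have := value_antitone hchores j ∅ (A j) (Finset.empty_subset _) (hA.subset j)
    rw [hv0] at this
    rw [h, hv0] at hij
    exact absurd hij (not_lt.2 this)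
end

section
/- For every fair-division instance with objective valuations, an EQ1 allocation always exists. -/
/-- An allocation is EQ1 if every inequity can be removed by deleting a single
item from one of the two bundles involved. -/
def EQ1 {n : ℕ} (v : Fin n → Finset ℕ → ℤ) (A : Fin n → Finset ℕ) : Prop :=
  ∀ i j : Fin n, v i (A i) < v j (A j) →
    ∃ x ∈ A i ∪ A j, v j ((A j).erase x) ≤ v i ((A i).erase x)

/-- Giving a new item `x` to agent `p` keeps the bundles disjoint and adds `x` to their union. -/
lemma update_insert_partition {n : ℕ} {A : Fin n → Finset ℕ} {T : Finset ℕ} {x : ℕ}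
    (hd : ∀ i j : Fin n, i ≠ j → Disjoint (A i) (A j))
    (hU : Finset.univ.biUnion A = T) (hx : x ∉ T) (p : Fin n) :
    (∀ i j : Fin n, i ≠ j → Disjoint (Function.update A p (insert x (A p)) i)
      (Function.update A p (insert x (A p)) j)) ∧
    Finset.univ.biUnion (Function.update A p (insert x (A p))) = insert x T := by
  have hnot : ∀ i, x ∉ A i := fun i hi =>
    hx (hU ▸ Finset.mem_biUnion.2 ⟨i, Finset.mem_univ i, hi⟩)
  constructor
  · intro i j hij
    by_cases hi : i = p
    · subst hi
      have hj : j ≠ i := hij.symm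
      simp [hj, hnot, hd i j hij]
    · by_cases hj : j = p
      · subst hj
        simp [hi, hnot, hd i j hij]
      · simp [hi, hj, hd i j hij]
  · ext y
    simp only [Finset.mem_biUnion, Finset.mem_univ, true_and, Finset.mem_insert, ← hU]
    constructor
    · rintro ⟨i, hi⟩
      by_cases h : i = p
      · subst h
        simp only [Function.update_self, Finset.mem_insert] at hi
        exact hi.imp_right fun h => ⟨i, h⟩
      · rw [Function.update_of_ne h] at hi
        exact Or.inr ⟨i, hi⟩
    · rintro (rfl | ⟨i, hi⟩)
      · exact ⟨p, by simp⟩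
      · refine ⟨i, ?_⟩
        by_cases h : i = p
        · subst h
          simp [hi]
        · rwa [Function.update_of_ne h]

/-- Giving a good to a poorest agent preserves EQ1. -/
lemma EQ1.insert_good {n m : ℕ} {v : Fin n → Finset ℕ → ℤ} {A : Fin n → Finset ℕ} {g : ℕ}
    (hA : EQ1 v A) (hg : IsGood m v g) (hgm : g ∈ Finset.Icc 1 m)
    (hsub : ∀ i, A i ⊆ Finset.Icc 1 m) (hnot : ∀ i, g ∉ A i)
    (p : Fin n) (hp : ∀ k, v p (A p) ≤ v k (A k)) :
    EQ1 v (Function.update A p (insert g (A p))) := by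
  -- Adding `g` to a sub-bundle not containing it can only raise values.
  have mono : ∀ S ⊆ A p, v p S ≤ v p (insert g S) := by
    intro S hS
    have h := hg p (insert g S) (Finset.insert_subset hgm (hS.trans (hsub p)))
      (Finset.mem_insert_self g S)
    rwa [Finset.erase_insert fun h => hnot p (hS h)] at h
  intro i j hij
  by_cases hj : j = p
  · subst hj
    by_cases hi : i = j
    · subst hi
      exact absurd hij (lt_irrefl _)
    · refine ⟨g, by simp, ?_⟩
      simpa [Function.update_of_ne hi, Finset.erase_eq_of_notMem (hnot i), hnot j] using hp i
  · rw [Function.update_of_ne hj] at hij ⊢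
    by_cases hi : i = p
    · subst hi
      rw [Function.update_self] at hij ⊢
      obtain ⟨x, hx, hle⟩ := hA i j ((mono _ subset_rfl).trans_lt hij)
      have hgx : g ≠ x := by
        rintro rfl
        exact (Finset.mem_union.1 hx).elim (hnot i) (hnot j)
      refine ⟨x, Finset.union_subset_union_left (Finset.subset_insert _ _) hx, ?_⟩
      rw [Finset.erase_insert_of_ne hgx]
      exact hle.trans (mono _ (Finset.erase_subset _ _))
    · rw [Function.update_of_ne hi] at hij ⊢
      exact hA i j hij

/-- Giving a chore to a richest agent preserves EQ1. -/
lemma EQ1.insert_chore {n m : ℕ} {v : Fin n → Finset ℕ → ℤ} {A : Fin n → Finset ℕ} {c : ℕ}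
    (hA : EQ1 v A) (hc : IsChore m v c) (hcm : c ∈ Finset.Icc 1 m)
    (hsub : ∀ i, A i ⊆ Finset.Icc 1 m) (hnot : ∀ i, c ∉ A i)
    (p : Fin n) (hp : ∀ k, v k (A k) ≤ v p (A p)) :
    EQ1 v (Function.update A p (insert c (A p))) := by
  -- Adding `c` to a sub-bundle not containing it can only lower values.
  have anti : ∀ S ⊆ A p, v p (insert c S) ≤ v p S := by
    intro S hS
    have h := hc p (insert c S) (Finset.insert_subset hcm (hS.trans (hsub p)))
      (Finset.mem_insert_self c S)
    rwa [Finset.erase_insert fun h => hnot p (hS h)] at h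
  intro i j hij
  by_cases hi : i = p
  · subst hi
    by_cases hj : j = i
    · subst hj
      exact absurd hij (lt_irrefl _)
    · refine ⟨c, by simp, ?_⟩
      simpa [Function.update_of_ne hj, Finset.erase_eq_of_notMem (hnot j), hnot i] using hp j
  · rw [Function.update_of_ne hi] at hij ⊢
    by_cases hj : j = p
    · subst hj
      rw [Function.update_self] at hij ⊢
      obtain ⟨x, hx, hle⟩ := hA i j (hij.trans_le (anti _ subset_rfl))
      have hcx : c ≠ x := by
        rintro rfl
        exact (Finset.mem_union.1 hx).elim (hnot i) (hnot j)
      refine ⟨x, Finset.union_subset_union_right (Finset.subset_insert _ _) hx, ?_⟩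
      rw [Finset.erase_insert_of_ne hcx]
      exact (anti _ (Finset.erase_subset _ _)).trans hle
    · rw [Function.update_of_ne hj] at hij ⊢
      exact hA i j hij

/-- For every instance with objective valuations (every item is a good or a
chore), an EQ1 allocation exists. -/
theorem eq1_exists_objective (n m : ℕ) (hn : 0 < n)
    (v : Fin n → Finset ℕ → ℤ) (hv0 : ∀ i, v i ∅ = 0)
    (hobj : ∀ x ∈ Finset.Icc 1 m, IsGood m v x ∨ IsChore m v x) :
    ∃ A : Fin n → Finset ℕ, IsAllocation m A ∧ EQ1 v A := by
  have : Nonempty (Fin n) := ⟨⟨0, hn⟩⟩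
  suffices H : ∀ T ⊆ Finset.Icc 1 m, ∃ A : Fin n → Finset ℕ,
      ((∀ i j : Fin n, i ≠ j → Disjoint (A i) (A j)) ∧ Finset.univ.biUnion A = T) ∧ EQ1 v A from
    H _ subset_rfl
  intro T
  induction T using Finset.induction_on with
  | empty =>
    intro _
    refine ⟨fun _ => ∅, ⟨by simp, by ext; simp⟩, fun i j hij => ?_⟩
    simp [hv0] at hij
  | insert x T hx ih =>
    intro hT
    obtain ⟨hxm, hTm⟩ := Finset.insert_subset_iff.1 hT
    obtain ⟨A, ⟨hd, hU⟩, hE⟩ := ih hTm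
    have hAT : ∀ i, A i ⊆ T := fun i =>
      hU ▸ Finset.subset_biUnion_of_mem A (Finset.mem_univ i)
    have hsub : ∀ i, A i ⊆ Finset.Icc 1 m := fun i => (hAT i).trans hTm
    have hnot : ∀ i, x ∉ A i := fun i h => hx (hAT i h)
    rcases hobj x hxm with hg | hc
    · obtain ⟨p, hp⟩ := Finite.exists_min fun k => v k (A k)
      exact ⟨_, update_insert_partition hd hU hx p, hE.insert_good hg hxm hsub hnot p hp⟩
    · obtain ⟨p, hp⟩ := Finite.exists_max fun k => v k (A k)
      exact ⟨_, update_insert_partition hd hU hx p, hE.insert_chore hc hxm hsub hnot p hp⟩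
end

section
/- For every fair-division instance with additive objective valuations (with good/chore partition M = G ∪ C), an EQX_g^c allocation always exists. -/
namespace EqxGreedy

/-- The value of agent `i` for its own bundle, where `w i x` is its value for the item `x`. -/
def util {n : ℕ} (w : Fin n → ℕ → ℤ) (A : Fin n → Finset ℕ) (i : Fin n) : ℤ :=
  ∑ x ∈ A i, w i x

/-- The bundles are pairwise disjoint with union `T`. -/
def Partial {n : ℕ} (A : Fin n → Finset ℕ) (T : Finset ℕ) : Prop :=
  (∀ i j : Fin n, i ≠ j → Disjoint (A i) (A j)) ∧ Finset.univ.biUnion A = T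

/-- Alternative (i): every inequity of `i` vanishes upon removing any good from the richer
agent. -/
def GoodAlt {n : ℕ} (w : Fin n → ℕ → ℤ) (G : Finset ℕ) (A : Fin n → Finset ℕ) (i : Fin n) :
    Prop :=
  ∀ j, util w A i < util w A j →
    (A j ∩ G).Nonempty ∧ ∀ g ∈ A j ∩ G, util w A j - w j g ≤ util w A i

/-- Alternative (ii): every inequity of `i` vanishes upon removing any chore from `A i`. -/
def ChoreAlt {n : ℕ} (w : Fin n → ℕ → ℤ) (C : Finset ℕ) (A : Fin n → Finset ℕ) (i : Fin n) :
    Prop :=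
  ∀ j, util w A i < util w A j →
    (A i ∩ C).Nonempty ∧ ∀ c ∈ A i ∩ C, util w A j ≤ util w A i - w i c

/-- The allocation obtained from `A` by giving the item `x` to agent `i`. -/
def give {n : ℕ} (A : Fin n → Finset ℕ) (i : Fin n) (x : ℕ) : Fin n → Finset ℕ :=
  Function.update A i (insert x (A i))

variable {n : ℕ} {w : Fin n → ℕ → ℤ} {A : Fin n → Finset ℕ} {T : Finset ℕ}

lemma give_self (i : Fin n) (x : ℕ) : give A i x i = insert x (A i) := by
  simp [give]

lemma give_of_ne {i j : Fin n} (h : j ≠ i) (x : ℕ) : give A i x j = A j := by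
  simp [give, h]

lemma mem_give {i j : Fin n} {x y : ℕ} : y ∈ give A i x j ↔ y ∈ A j ∨ (j = i ∧ y = x) := by
  by_cases h : j = i
  · subst h
    simp [give_self, or_comm]
  · simp [give_of_ne h, h]

lemma Partial.notMem (hA : Partial A T) {x : ℕ} (hx : x ∉ T) (i : Fin n) : x ∉ A i := by
  intro h
  exact hx (hA.2 ▸ Finset.mem_biUnion.2 ⟨i, Finset.mem_univ i, h⟩)

lemma Partial.give (hA : Partial A T) {x : ℕ} (hx : x ∉ T) (i : Fin n) :
    Partial (give A i x) (insert x T) := by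
  have hn := hA.notMem hx
  refine ⟨fun j k hjk => Finset.disjoint_left.2 fun y hj hk => ?_, ?_⟩
  · have hd : y ∈ A j → y ∉ A k := fun h => Finset.disjoint_left.1 (hA.1 j k hjk) h
    rw [mem_give] at hj hk
    grind
  · ext y
    simp only [Finset.mem_biUnion, Finset.mem_univ, true_and, mem_give, Finset.mem_insert,
      ← hA.2]
    grind

lemma util_give_self {i : Fin n} {x : ℕ} (hx : x ∉ A i) :
    util w (give A i x) i = util w A i + w i x := by
  rw [util, give_self, Finset.sum_insert hx, util, add_comm]

lemma util_give_of_ne {i j : Fin n} (h : j ≠ i) (x : ℕ) :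
    util w (give A i x) j = util w A j := by
  rw [util, give_of_ne h, util]

/-- Greedy allocation of the goods in `R` on top of `A`. The induction carries along that
every agent values each of its goods at least as much as the remaining ones. -/
lemma exists_goods_phase (hn : 0 < n) (G : Finset ℕ) (R : Finset ℕ) :
    ∀ (A : Fin n → Finset ℕ) (T : Finset ℕ), Partial A T → Disjoint R T → R ⊆ G →
      (∀ x ∈ R, ∀ i, 0 ≤ w i x) →
      (∀ i, ∀ x ∈ A i, ∀ y ∈ R, w i y ≤ w i x) → (∀ i, GoodAlt w G A i) →
      ∃ B, Partial B (R ∪ T) ∧ ∀ i, GoodAlt w G B i := by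
  induction hk : R.card generalizing R with
  | zero =>
    intro A T hA _ _ _ _ hE
    rw [Finset.card_eq_zero] at hk
    subst hk
    exact ⟨A, by simpa using hA, hE⟩
  | succ k ih =>
    intro A T hA hd hRG hw hord hE
    have : Nonempty (Fin n) := ⟨⟨0, hn⟩⟩
    obtain ⟨i, hi⟩ := Finite.exists_min (util w A)
    obtain ⟨x, hxR, hx⟩ := R.exists_max_image (w i) (Finset.card_pos.1 (by omega))
    have hxT : x ∉ T := Finset.disjoint_left.1 hd hxR
    have hself := util_give_self (w := w) (hA.notMem hxT i)
    have hwx := hw x hxR i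
    have hstep := ih (R.erase x) (by rw [Finset.card_erase_of_mem hxR]; omega)
      (give A i x) (insert x T) (hA.give hxT i)
    rw [Finset.union_insert, ← Finset.insert_union, Finset.insert_erase hxR] at hstep
    refine hstep ?_ ((Finset.erase_subset _ _).trans hRG)
      (fun y hy => hw y (Finset.mem_of_mem_erase hy)) ?_ ?_
    · refine Finset.disjoint_left.2 fun y hy => ?_
      have := Finset.disjoint_left.1 hd (Finset.mem_of_mem_erase hy)
      simp [this, Finset.ne_of_mem_erase hy]
    · intro j y hy z hz
      have hzR := Finset.mem_of_mem_erase hz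
      rcases mem_give.1 hy with h | ⟨rfl, rfl⟩
      · exact hord j y h z hzR
      · exact hx z hzR
    · intro k j hkj
      by_cases hj : j = i
      · subst hj
        have hk : k ≠ j := by rintro rfl; exact lt_irrefl _ hkj
        rw [util_give_of_ne hk] at hkj ⊢
        refine ⟨⟨x, by simp [give_self, hRG hxR]⟩, fun g hg => ?_⟩
        have hmin := hi k
        -- `x` is the least valued good of `j`, and `j` was poorest before taking it.
        have hgx : w j x ≤ w j g := by
          rcases mem_give.1 (Finset.mem_inter.1 hg).1 with h | ⟨_, rfl⟩
          · exact hord j g h x hxR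
          · exact le_rfl
        linarith
      · rw [util_give_of_ne hj] at hkj ⊢
        rw [give_of_ne hj]
        have hmono : util w A k ≤ util w (give A i x) k := by
          by_cases hki : k = i
          · subst hki; linarith
          · rw [util_give_of_ne hki]
        obtain ⟨h1, h2⟩ := hE k j (hmono.trans_lt hkj)
        exact ⟨h1, fun g hg => (h2 g hg).trans hmono⟩

/-- Greedy allocation of the chores in `R` on top of `A`. The induction carries along that
every agent dislikes each of its chores at least as much as the remaining ones. -/
lemma exists_chores_phase (hn : 0 < n) (G C : Finset ℕ) (hGC : Disjoint G C) (R : Finset ℕ) :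
    ∀ (A : Fin n → Finset ℕ) (T : Finset ℕ), Partial A T → Disjoint R T → R ⊆ C →
      (∀ x ∈ R, ∀ i, w i x ≤ 0) →
      (∀ i, ∀ x ∈ A i ∩ C, ∀ y ∈ R, w i x ≤ w i y) →
      (∀ i, GoodAlt w G A i ∨ ChoreAlt w C A i) →
      ∃ B, Partial B (R ∪ T) ∧ ∀ i, GoodAlt w G B i ∨ ChoreAlt w C B i := by
  induction hk : R.card generalizing R with
  | zero =>
    intro A T hA _ _ _ _ hE
    rw [Finset.card_eq_zero] at hk
    subst hk
    exact ⟨A, by simpa using hA, hE⟩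
  | succ k ih =>
    intro A T hA hd hRC hw hord hE
    have : Nonempty (Fin n) := ⟨⟨0, hn⟩⟩
    obtain ⟨i, hi⟩ := Finite.exists_max (util w A)
    obtain ⟨x, hxR, hx⟩ := R.exists_min_image (w i) (Finset.card_pos.1 (by omega))
    have hxT : x ∉ T := Finset.disjoint_left.1 hd hxR
    have hxG : x ∉ G := fun h => Finset.disjoint_left.1 hGC h (hRC hxR)
    have hself := util_give_self (w := w) (hA.notMem hxT i)
    have hwx := hw x hxR i
    have hanti : ∀ k, util w (give A i x) k ≤ util w A k := by
      intro k
      by_cases hki : k = i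
      · subst hki; linarith
      · rw [util_give_of_ne hki]
    have hstep := ih (R.erase x) (by rw [Finset.card_erase_of_mem hxR]; omega)
      (give A i x) (insert x T) (hA.give hxT i)
    rw [Finset.union_insert, ← Finset.insert_union, Finset.insert_erase hxR] at hstep
    refine hstep ?_ ((Finset.erase_subset _ _).trans hRC)
      (fun y hy => hw y (Finset.mem_of_mem_erase hy)) ?_ ?_
    · refine Finset.disjoint_left.2 fun y hy => ?_
      have := Finset.disjoint_left.1 hd (Finset.mem_of_mem_erase hy)
      simp [this, Finset.ne_of_mem_erase hy]
    · intro j y hy z hz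
      have hzR := Finset.mem_of_mem_erase hz
      obtain ⟨hy, hyC⟩ := Finset.mem_inter.1 hy
      rcases mem_give.1 hy with h | ⟨rfl, rfl⟩
      · exact hord j y (Finset.mem_inter.2 ⟨h, hyC⟩) z hzR
      · exact hx z hzR
    · intro k
      by_cases hki : k = i
      · subst hki
        refine Or.inr fun j _ => ⟨⟨x, by simp [give_self, hRC hxR]⟩, fun c hc => ?_⟩
        have hmax := (hanti j).trans (hi j)
        -- `x` is the mildest chore of `k`, and `k` was richest before taking it.
        have hcx : w k c ≤ w k x := by
          obtain ⟨hc, hcC⟩ := Finset.mem_inter.1 hc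
          rcases mem_give.1 hc with h | ⟨_, rfl⟩
          · exact hord k c (Finset.mem_inter.2 ⟨h, hcC⟩) x hxR
          · exact le_rfl
        linarith
      · rcases hE k with h | h
        · refine Or.inl fun j hkj => ?_
          rw [util_give_of_ne hki] at hkj ⊢
          obtain ⟨h1, h2⟩ := h j (hkj.trans_le (hanti j))
          have hgoods : give A i x j ∩ G = A j ∩ G := by
            ext y
            simp only [Finset.mem_inter, mem_give]
            grind
          rw [hgoods]
          exact ⟨h1, fun g hg => by linarith [h2 g hg, hanti j]⟩
        · refine Or.inr fun j hkj => ?_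
          rw [util_give_of_ne hki] at hkj ⊢
          rw [give_of_ne hki]
          obtain ⟨h1, h2⟩ := h j (hkj.trans_le (hanti j))
          exact ⟨h1, fun c hc => (hanti j).trans (h2 c hc)⟩

end EqxGreedy

/-- For every instance with additive objective valuations (good/chore partition
`M = G ∪ C`), an `EQX_g^c` allocation exists. -/
theorem eqxgc_exists_additive_objective (n m : ℕ) (hn : 0 < n)
    (v : Fin n → Finset ℕ → ℤ) (hv0 : ∀ i, v i ∅ = 0)
    (hadd : ∀ i : Fin n, ∀ S ⊆ Finset.Icc 1 m, v i S = ∑ x ∈ S, v i {x})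
    (G C : Finset ℕ) (hGC : G ∪ C = Finset.Icc 1 m) (hdisj : Disjoint G C)
    (hG : ∀ x ∈ G, IsGood m v x) (hC : ∀ x ∈ C, IsChore m v x) :
    ∃ A : Fin n → Finset ℕ, IsAllocation m A ∧ EQXgc v G C A := by
  classical
  have hGM : G ⊆ Finset.Icc 1 m := hGC ▸ Finset.subset_union_left
  have hCM : C ⊆ Finset.Icc 1 m := hGC ▸ Finset.subset_union_right
  have hGw : ∀ x ∈ G, ∀ i, 0 ≤ v i {x} := fun x hx i => by
    simpa [hv0] using hG x hx i {x} (by simpa using hGM hx) (by simp)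
  have hCw : ∀ x ∈ C, ∀ i, v i {x} ≤ 0 := fun x hx i => by
    simpa [hv0] using hC x hx i {x} (by simpa using hCM hx) (by simp)
  obtain ⟨A, hA, hAE⟩ := EqxGreedy.exists_goods_phase (w := fun i x => v i {x}) hn G G
    (fun _ => ∅) ∅ ⟨by simp, by ext; simp⟩ (by simp) subset_rfl hGw (by simp)
    (fun i j h => by simp [EqxGreedy.util] at h)
  rw [Finset.union_empty] at hA
  obtain ⟨B, hB, hBE⟩ := EqxGreedy.exists_chores_phase (w := fun i x => v i {x}) hn G C hdisj C
    A G hA hdisj.symm subset_rfl hCw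
    (fun i x hx => by
      obtain ⟨h1, h2⟩ := Finset.mem_inter.1 hx
      exact absurd h1 (hA.notMem (Finset.disjoint_right.1 hdisj h2) i))
    (fun i => Or.inl (hAE i))
  rw [Finset.union_comm, hGC] at hB
  have hBM : ∀ i, B i ⊆ Finset.Icc 1 m := fun i =>
    hB.2 ▸ Finset.subset_biUnion_of_mem B (Finset.mem_univ i)
  have hu : ∀ i, v i (B i) = EqxGreedy.util (fun i x => v i {x}) B i := fun i =>
    hadd i _ (hBM i)
  have her : ∀ i, ∀ x ∈ B i,
      v i ((B i).erase x) = EqxGreedy.util (fun i x => v i {x}) B i - v i {x} := fun i x hx => by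
    rw [hadd i _ ((Finset.erase_subset _ _).trans (hBM i)), Finset.sum_erase_eq_sub hx,
      EqxGreedy.util]
  refine ⟨B, hB, fun i => ?_⟩
  refine (hBE i).imp (fun h => ?_) (fun h => ?_) <;> intro j hj
  · rw [hu, hu] at hj
    refine ⟨(h j hj).1, fun g hg => ?_⟩
    rw [her j g (Finset.mem_inter.1 hg).1, hu]
    exact (h j hj).2 g hg
  · rw [hu, hu] at hj
    refine ⟨(h j hj).1, fun c hc => ?_⟩
    rw [her i c (Finset.mem_inter.1 hc).1, hu]
    exact (h j hj).2 c hc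
end

section
/- Greedy good-insertion preserves EQ1: let A = (A_1,…,A_n) be a partial allocation that is EQ1, let g ∈ M be a good not contained in any bundle of A, and let h be an agent with v_h(A_h) minimal among all agents. Then the partial allocation A' obtained from A by replacing A_h with A_h ∪ {g} (all other bundles unchanged) is EQ1. -/
/-!
Write `B = insert g (A h)`. Only pairs involving `h` are affected by the insertion.

* If `h` becomes the richer agent of a pair, deleting `g` restores `A h`, whose value is minimal.
* If `h` is still the poorer agent against `j`, then it was already poorer before, as `g` is a good.
  The item `x` that EQ1 of `A` supplies differs from `g`, so `B.erase x = insert g ((A h).erase x)`,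
  and since `g` is a good this is worth at least `(A h).erase x` to `h`. Hence `x` still works.
-/

/-- `A` is a partial allocation of items from `M = {1, …, m}`: pairwise disjoint
bundles contained in `M`, not necessarily covering `M`. -/
def IsPartialAllocation (m : ℕ) {n : ℕ} (A : Fin n → Finset ℕ) : Prop :=
  (∀ i j : Fin n, i ≠ j → Disjoint (A i) (A j)) ∧
  ∀ i : Fin n, A i ⊆ Finset.Icc 1 m

/-- Greedily inserting an unallocated good into a bundle of minimum value
preserves EQ1. -/
theorem greedy_good_insertion_preserves_eq1 (n m : ℕ)
    (v : Fin n → Finset ℕ → ℤ) (hv0 : ∀ i, v i ∅ = 0)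
    (A : Fin n → Finset ℕ) (hA : IsPartialAllocation m A)
    (hEQ1 : EQ1 v A)
    (g : ℕ) (hgM : g ∈ Finset.Icc 1 m) (hgood : IsGood m v g)
    (hgnew : ∀ i : Fin n, g ∉ A i)
    (h : Fin n) (hmin : ∀ i : Fin n, v h (A h) ≤ v i (A i)) :
    EQ1 v (Function.update A h (insert g (A h))) := by
  have hins : ∀ S ⊆ A h, v h S ≤ v h (insert g S) := by
    intro S hS
    have hgS : g ∉ S := fun hg => hgnew h (hS hg)
    have hle := hgood h (insert g S)
      (Finset.insert_subset hgM (hS.trans (hA.2 h))) (Finset.mem_insert_self g S)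
    rwa [Finset.erase_insert hgS] at hle
  intro i j hij
  by_cases hi : i = h
  · subst hi
    by_cases hj : j = i
    · subst hj
      exact absurd hij (lt_irrefl _)
    · simp only [Function.update_self, Function.update_of_ne hj] at hij ⊢
      obtain ⟨x, hx, hle⟩ := hEQ1 i j ((hins _ subset_rfl).trans_lt hij)
      have hgx : g ≠ x := by
        rintro rfl
        exact (Finset.mem_union.mp hx).elim (hgnew i) (hgnew j)
      refine ⟨x, Finset.union_subset_union_left (Finset.subset_insert g _) hx, ?_⟩
      rw [Finset.erase_insert_of_ne hgx]
      exact hle.trans (hins _ (Finset.erase_subset x _))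
  · by_cases hj : j = h
    · subst hj
      simp only [Function.update_self, Function.update_of_ne hi] at hij ⊢
      refine ⟨g, Finset.mem_union_right _ (Finset.mem_insert_self g _), ?_⟩
      rw [Finset.erase_insert (hgnew j), Finset.erase_eq_of_notMem (hgnew i)]
      exact hmin i
    · simp only [Function.update_of_ne hi, Function.update_of_ne hj] at hij ⊢
      exact hEQ1 i j hij
end

section
/- Greedy chore-insertion preserves EQ1: let A = (A_1,…,A_n) be a partial allocation that is EQ1, let c ∈ M be a chore not contained in any bundle of A, and let h be an agent with v_h(A_h) maximal among all agents. Then the partial allocation A' obtained from A by replacing A_h with A_h ∪ {c} (all other bundles unchanged) is EQ1. -/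
/-- Greedily inserting an unallocated chore into a bundle of maximum value
preserves EQ1. -/
theorem greedy_chore_insertion_preserves_eq1 (n m : ℕ)
    (v : Fin n → Finset ℕ → ℤ) (hv0 : ∀ i, v i ∅ = 0)
    (A : Fin n → Finset ℕ) (hA : IsPartialAllocation m A)
    (hEQ1 : EQ1 v A)
    (c : ℕ) (hcM : c ∈ Finset.Icc 1 m) (hchore : IsChore m v c)
    (hcnew : ∀ i : Fin n, c ∉ A i)
    (h : Fin n) (hmax : ∀ i : Fin n, v i (A i) ≤ v h (A h)) :
    EQ1 v (Function.update A h (insert c (A h))) := by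
  have hsub : insert c (A h) ⊆ Finset.Icc 1 m := Finset.insert_subset hcM (hA.2 h)
  intro i j hij
  by_cases hi : i = h
  · subst hi
    by_cases hj : j = i
    · subst hj
      exact absurd hij (lt_irrefl _)
    · refine ⟨c, by simp, ?_⟩
      rw [Function.update_self, Function.update_of_ne hj, Finset.erase_insert (hcnew i),
        Finset.erase_eq_of_notMem (hcnew j)]
      exact hmax j
  · by_cases hj : j = h
    · subst hj
      rw [Function.update_self, Function.update_of_ne hi] at *
      have hle := hchore j _ hsub (Finset.mem_insert_self c (A j))
      rw [Finset.erase_insert (hcnew j)] at hle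
      obtain ⟨x, hx, hxle⟩ := hEQ1 i j (hij.trans_le hle)
      have hxc : c ≠ x := by
        rintro rfl
        rcases Finset.mem_union.1 hx with hx | hx
        exacts [hcnew i hx, hcnew j hx]
      refine ⟨x, Finset.union_subset_union_right (Finset.subset_insert c (A j)) hx, ?_⟩
      have hdel := hchore j ((insert c (A j)).erase x) ((Finset.erase_subset _ _).trans hsub)
        (Finset.mem_erase.2 ⟨hxc, Finset.mem_insert_self c (A j)⟩)
      rw [Finset.erase_right_comm, Finset.erase_insert (hcnew j)] at hdel
      exact hdel.trans hxle
    · rw [Function.update_of_ne hi, Function.update_of_ne hj] at *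
      exact hEQ1 i j hij
end

section
/- Good-moving potential increase: let A = (A_1,…,A_n) be an allocation, let i be an agent with v_i(A_i) = min_h v_h(A_h), let j be an agent and g ∈ A_j a good with v_i(A_i) < v_j(A_j ∖ {g}). Let A' be the allocation obtained from A by moving g from A_j to A_i (i.e., A'_j = A_j ∖ {g}, A'_i = A_i ∪ {g}, all other bundles unchanged). Then Φ(A') ≻ Φ(A), where Φ(B) = (x(B), y(B), z(B)) with x(B) = min_h v_h(B_h), y(B) = −|{h : v_h(B_h) = x(B)}|, z(B) = Σ_{h : v_h(B_h) = x(B)} |B_h|, and ≻ is the strict lexicographic order on triples. -/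
/-- The minimum bundle value of an allocation. -/
def minVal {n : ℕ} (hn : 0 < n) (v : Fin n → Finset ℕ → ℤ)
    (B : Fin n → Finset ℕ) : ℤ :=
  Finset.univ.inf' (Finset.univ_nonempty_iff.mpr ⟨⟨0, hn⟩⟩) fun h => v h (B h)

/-- The potential `Φ(B) = (x(B), y(B), z(B))`: the minimum bundle value, minus
the number of agents attaining it, and the total number of items held by those
agents. -/
def Phi {n : ℕ} (hn : 0 < n) (v : Fin n → Finset ℕ → ℤ)
    (B : Fin n → Finset ℕ) : ℤ × ℤ × ℤ :=
  (minVal hn v B,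
   -(((Finset.univ.filter fun h => v h (B h) = minVal hn v B).card : ℤ)),
   ∑ h ∈ Finset.univ.filter (fun h => v h (B h) = minVal hn v B), ((B h).card : ℤ))

/-- Strict lexicographic order on triples: `a ≻ b`. -/
def LexGT (a b : ℤ × ℤ × ℤ) : Prop :=
  b.1 < a.1 ∨ (a.1 = b.1 ∧ (b.2.1 < a.2.1 ∨ (a.2.1 = b.2.1 ∧ b.2.2 < a.2.2)))

lemma minVal_eq {n : ℕ} (hn : 0 < n) (v : Fin n → Finset ℕ → ℤ) (B : Fin n → Finset ℕ)
    (i : Fin n) (hmin : ∀ h : Fin n, v i (B i) ≤ v h (B h)) : minVal hn v B = v i (B i) :=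
  le_antisymm (Finset.inf'_le _ (Finset.mem_univ i)) (Finset.le_inf' _ _ fun h _ => hmin h)

/-- Moving a good `g` from `A j` to the bundle of an agent `i` of minimum value,
when `v_i(A_i) < v_j(A_j ∖ {g})`, strictly increases the potential `Φ`
lexicographically. -/
theorem good_moving_potential_increase (n m : ℕ) (hn : 0 < n)
    (v : Fin n → Finset ℕ → ℤ) (hv0 : ∀ i, v i ∅ = 0)
    (A : Fin n → Finset ℕ) (hA : IsAllocation m A)
    (i : Fin n) (hmin : ∀ h : Fin n, v i (A i) ≤ v h (A h))
    (j : Fin n) (g : ℕ) (hg : g ∈ A j) (hgood : IsGood m v g)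
    (hlt : v i (A i) < v j ((A j).erase g)) :
    LexGT
      (Phi hn v
        (Function.update (Function.update A j ((A j).erase g)) i
          (insert g (A i))))
      (Phi hn v A) := by
  obtain ⟨hdisj, hunion⟩ := hA
  have hsub : ∀ h, A h ⊆ Finset.Icc 1 m := fun h =>
    hunion ▸ Finset.subset_biUnion_of_mem A (Finset.mem_univ h)
  -- If `i = j`, then `hlt` says that removing the good `g` raises the value of `A j`.
  have hij : i ≠ j := by
    rintro rfl
    exact absurd (hgood i _ (hsub i) hg) (not_le.mpr hlt)
  have hgi : g ∉ A i := fun h => Finset.disjoint_left.mp (hdisj i j hij) h hg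
  have hgain : v i (A i) ≤ v i (insert g (A i)) := by
    have h := hgood i (insert g (A i))
      (Finset.insert_subset (hsub j hg) (hsub i)) (Finset.mem_insert_self _ _)
    rwa [Finset.erase_insert hgi] at h
  set B := Function.update (Function.update A j ((A j).erase g)) i (insert g (A i)) with hB
  have hBi : B i = insert g (A i) := by simp [hB]
  have hBj : B j = (A j).erase g := by simp [hB, hij.symm]
  have hBh : ∀ h, h ≠ i → h ≠ j → B h = A h := fun h h1 h2 => by simp [hB, h1, h2]
  have hlow : ∀ h, v i (A i) ≤ v h (B h) := by
    intro h
    by_cases h1 : h = i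
    · subst h1; rwa [hBi]
    by_cases h2 : h = j
    · subst h2; rw [hBj]; exact hlt.le
    rw [hBh h h1 h2]; exact hmin h
  have hle : v i (A i) ≤ minVal hn v B := Finset.le_inf' _ _ fun h _ => hlow h
  unfold LexGT Phi
  rw [minVal_eq hn v A i hmin]
  rcases hle.lt_or_eq with hgt | heq
  · exact Or.inl hgt
  refine Or.inr ⟨heq.symm, ?_⟩
  dsimp only
  rw [← heq]
  have hss : (Finset.univ.filter fun h => v h (B h) = v i (A i)) ⊆
      Finset.univ.filter fun h => v h (A h) = v i (A i) := by
    intro h hh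
    simp only [Finset.mem_filter, Finset.mem_univ, true_and] at hh ⊢
    by_cases h1 : h = i
    · rw [h1]
    by_cases h2 : h = j
    · subst h2; rw [hBj] at hh; exact absurd hh hlt.ne'
    rwa [hBh h h1 h2] at hh
  rcases hss.eq_or_ssubset with hS | hS
  · refine Or.inr ⟨by rw [hS], ?_⟩
    rw [← hS]
    have hiS : i ∈ Finset.univ.filter fun h => v h (B h) = v i (A i) := by
      rw [hS]; simp
    refine Finset.sum_lt_sum (fun h hh => ?_) ⟨i, hiS, ?_⟩
    · have hj : h ≠ j := by
        rintro rfl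
        rw [Finset.mem_filter, hBj] at hh
        exact hlt.ne' hh.2
      by_cases h1 : h = i
      · subst h1; rw [hBi]; exact_mod_cast Finset.card_le_card (Finset.subset_insert _ _)
      · rw [hBh h h1 hj]
    · rw [hBi, Finset.card_insert_of_notMem hgi]; push_cast; omega
  · left
    have := Finset.card_lt_card hS
    omega
end

section
/- Chore-moving potential increase: let A = (A_1,…,A_n) be an allocation, let j be an agent with v_j(A_j) = max_h v_h(A_h), let i be an agent and c ∈ A_i a chore with v_i(A_i ∖ {c}) < v_j(A_j). Let A' be the allocation obtained from A by moving c from A_i to A_j (i.e., A'_i = A_i ∖ {c}, A'_j = A_j ∪ {c}, all other bundles unchanged). Then Ξ(A') ≻ Ξ(A), where Ξ(B) = (x'(B), y'(B), z'(B)) with x'(B) = −max_h v_h(B_h), y'(B) = −|{h : v_h(B_h) = −x'(B)}|, z'(B) = Σ_{h : v_h(B_h) = −x'(B)} |B_h|, and ≻ is the strict lexicographic order on triples. -/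
/-- The maximum bundle value of an allocation. -/
def maxVal {n : ℕ} (hn : 0 < n) (v : Fin n → Finset ℕ → ℤ)
    (B : Fin n → Finset ℕ) : ℤ :=
  Finset.univ.sup' (Finset.univ_nonempty_iff.mpr ⟨⟨0, hn⟩⟩) fun h => v h (B h)

/-- The potential `Ξ(B) = (x'(B), y'(B), z'(B))`: minus the maximum bundle
value, minus the number of agents attaining the maximum, and the total number
of items held by those agents. -/
def Xi {n : ℕ} (hn : 0 < n) (v : Fin n → Finset ℕ → ℤ)
    (B : Fin n → Finset ℕ) : ℤ × ℤ × ℤ :=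
  (-(maxVal hn v B),
   -(((Finset.univ.filter fun h => v h (B h) = maxVal hn v B).card : ℤ)),
   ∑ h ∈ Finset.univ.filter (fun h => v h (B h) = maxVal hn v B), ((B h).card : ℤ))

/-- Moving a chore `c` from `A i` to the bundle of an agent `j` of maximum
value, when `v_i(A_i ∖ {c}) < v_j(A_j)`, strictly increases the potential `Ξ`
lexicographically. -/
theorem chore_moving_potential_increase (n m : ℕ) (hn : 0 < n)
    (v : Fin n → Finset ℕ → ℤ) (hv0 : ∀ i, v i ∅ = 0)
    (A : Fin n → Finset ℕ) (hA : IsAllocation m A)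
    (j : Fin n) (hmax : ∀ h : Fin n, v h (A h) ≤ v j (A j))
    (i : Fin n) (c : ℕ) (hc : c ∈ A i) (hchore : IsChore m v c)
    (hlt : v i ((A i).erase c) < v j (A j)) :
    LexGT
      (Xi hn v
        (Function.update (Function.update A i ((A i).erase c)) j
          (insert c (A j))))
      (Xi hn v A) := by
  have hsub : ∀ h, A h ⊆ Finset.Icc 1 m := fun h => by
    rw [← hA.2]
    exact Finset.subset_biUnion_of_mem A (Finset.mem_univ h)
  -- for `i = j` the chore property would contradict `hlt`
  have hij : i ≠ j := by
    rintro rfl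
    exact absurd (hchore i (A i) (hsub i) hc) (not_le.mpr hlt)
  have hcj : c ∉ A j := Finset.disjoint_left.mp (hA.1 i j hij) hc
  set B := Function.update (Function.update A i ((A i).erase c)) j (insert c (A j)) with hB
  have hBj : B j = insert c (A j) := by simp [hB]
  have hBi : B i = (A i).erase c := by simp [hB, hij]
  have hBh : ∀ h, h ≠ i → h ≠ j → B h = A h := fun h h1 h2 => by simp [hB, h1, h2]
  have hvj : v j (B j) ≤ v j (A j) := by
    have := hchore j (insert c (A j)) (Finset.insert_subset (hsub i hc) (hsub j))
      (Finset.mem_insert_self _ _)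
    rwa [Finset.erase_insert hcj, ← hBj] at this
  have hvi : v i (B i) < v j (A j) := by rwa [hBi]
  have hle : ∀ h, v h (B h) ≤ v j (A j) := fun h => by
    by_cases h1 : h = i
    · subst h1; exact hvi.le
    by_cases h2 : h = j
    · subst h2; exact hvj
    rw [hBh h h1 h2]; exact hmax h
  have hMA : maxVal hn v A = v j (A j) :=
    le_antisymm (Finset.sup'_le _ _ fun h _ => hmax h)
      (Finset.le_sup' (fun h => v h (A h)) (Finset.mem_univ j))
  have hMB : maxVal hn v B ≤ v j (A j) := Finset.sup'_le _ _ fun h _ => hle h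
  unfold LexGT Xi
  simp only [hMA]
  rcases hMB.lt_or_eq with hlt' | heq
  · left; omega
  right
  simp only [heq, true_and]
  have hSub : (Finset.univ.filter fun h => v h (B h) = v j (A j)) ⊆
      Finset.univ.filter fun h => v h (A h) = v j (A j) := by
    intro h hh
    simp only [Finset.mem_filter, Finset.mem_univ, true_and] at hh ⊢
    by_cases h2 : h = j
    · rw [h2]
    have h1 : h ≠ i := by
      rintro rfl
      exact hvi.ne hh
    rwa [hBh h h1 h2] at hh
  -- equal sets give a gain in the third coordinate, strict inclusion one in the second
  rcases hSub.eq_or_ssubset with hS | hS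
  · right
    refine ⟨by rw [hS], ?_⟩
    rw [← hS]
    have hcard : (A j).card < (B j).card := by
      rw [hBj, Finset.card_insert_of_notMem hcj]
      omega
    refine Finset.sum_lt_sum (fun h hh => ?_) ⟨j, ?_, by exact_mod_cast hcard⟩
    · have h1 : h ≠ i := by
        rintro rfl
        exact hvi.ne (Finset.mem_filter.mp hh).2
      by_cases h2 : h = j
      · rw [h2]; exact_mod_cast hcard.le
      · rw [hBh h h1 h2]
    · rw [hS]
      simp
  · left
    have := Finset.card_lt_card hS
    omega
end
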